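/- arXiv:1404.0386 — 2 statements merged into one kernel-verified Lean document; each statement's English description precedes it below -/
import Mathlib

section
/- For every integer k ≥ 0 and for Lebesgue-almost every x ∈ (0,1) (such x is irrational, with continued fraction coefficients a_j = a_j(x)), the three averages (1/n) Σ_{j=1}^n log(a_j + k), (1/n) Σ_{j=1}^n log(a_{2j} + k) and (1/n) Σ_{j=1}^n log(a_{2j-1} + k) all converge to log K_k as n → ∞. -/
open Filter Finset MeasureTheory

/-- `qden a n` is the denominator `q_n` of the continued fraction with partial
quotients `a_1 = a 0, a_2 = a 1, …` (0-indexed sequence `a`), defined by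
`q_0 = 1`, `q_1 = a_1`, `q_n = a_n q_{n-1} + q_{n-2}`. -/
def qden (a : ℕ → ℕ+) : ℕ → ℕ
  | 0 => 1
  | 1 => a 0
  | (n+2) => (a (n+1) : ℕ) * qden a (n+1) + qden a n

/-- `pnum a n` is the numerator `p_n`, defined by `p_0 = 0`, `p_1 = 1`,
`p_n = a_n p_{n-1} + p_{n-2}`. -/
def pnum (a : ℕ → ℕ+) : ℕ → ℕ
  | 0 => 0
  | 1 => 1
  | (n+2) => (a (n+1) : ℕ) * pnum a (n+1) + pnum a n

/-- The value `[a_1, a_2, …]` of the infinite continued fraction with partial quotients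
`a_1 = a 0, a_2 = a 1, …`, i.e. the limit of the convergents `p_n / q_n` (which always
exists). -/
noncomputable def cfVal (a : ℕ → ℕ+) : ℝ :=
  limUnder atTop (fun n => (pnum a n : ℝ) / (qden a n : ℝ))

/-- The Khintchine-type constant `K_k = ∏_{j=1}^∞ (1 + 1/(j(j+2)))^{log(j+k)/log 2}`. -/
noncomputable def Kconst (k : ℕ) : ℝ :=
  ∏' j : ℕ, (1 + 1 / (((j:ℝ)+1) * ((j:ℝ)+3))) ^ (Real.log ((j:ℝ)+1+(k:ℝ)) / Real.log 2)


/-- Gauss map. -/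
noncomputable def gT (x : ℝ) : ℝ := Int.fract x⁻¹

lemma gT_measurable : Measurable gT := by unfold gT; fun_prop

lemma gT_irr {x : ℝ} (hx : Irrational x) : Irrational (gT x) := by
  unfold gT
  rw [Int.fract]
  exact (irrational_inv_iff.2 hx).sub_intCast _

lemma gT_iter_irr {x : ℝ} (hx : Irrational x) (n : ℕ) : Irrational (gT^[n] x) := by
  induction n with
  | zero => simpa
  | succ n ih => rw [Function.iterate_succ_apply']; exact gT_irr ih

lemma gT_mem {x : ℝ} (hx : Irrational x) : gT x ∈ Set.Ioo (0:ℝ) 1 := by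
  refine ⟨lt_of_le_of_ne (Int.fract_nonneg _) ?_, Int.fract_lt_one _⟩
  exact fun h => (gT_irr hx).ne_zero h.symm

lemma gT_iter_mem {x : ℝ} (hx : Irrational x) (h : x ∈ Set.Ioo (0:ℝ) 1) (n : ℕ) :
    gT^[n] x ∈ Set.Ioo (0:ℝ) 1 := by
  cases n with
  | zero => simpa
  | succ n => rw [Function.iterate_succ_apply']; exact gT_mem (gT_iter_irr hx n)

/-- partial quotients -/
noncomputable def cfA (x : ℝ) (n : ℕ) : ℕ+ := ⌊(gT^[n] x)⁻¹⌋₊.toPNat'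

lemma one_le_floor {x : ℝ} (h : x ∈ Set.Ioo (0:ℝ) 1) : 1 ≤ ⌊x⁻¹⌋₊ := by
  rw [Nat.one_le_floor_iff]
  exact (one_le_inv₀ h.1).2 h.2.le

lemma cfA_coe {x : ℝ} (hx : Irrational x) (h : x ∈ Set.Ioo (0:ℝ) 1) (n : ℕ) :
    (cfA x n : ℕ) = ⌊(gT^[n] x)⁻¹⌋₊ := by
  unfold cfA
  have := one_le_floor (gT_iter_mem hx h n)
  rw [Nat.toPNat'_coe, if_pos (by omega)]

lemma floor_add_gT {x : ℝ} (h : 0 ≤ x) : ((⌊x⁻¹⌋₊ : ℕ) : ℝ) + gT x = x⁻¹ := by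
  unfold gT
  rw [natCast_floor_eq_intCast_floor (inv_nonneg.2 h)]
  exact Int.floor_add_fract _

lemma qden_pos (a : ℕ → ℕ+) : ∀ n, 1 ≤ qden a n
  | 0 => by simp [qden]
  | 1 => by simp [qden]; exact (a 0).pos
  | (n+2) => by
    have := qden_pos a n
    simp only [qden]; omega

lemma qden_ge (a : ℕ → ℕ+) : ∀ n, n ≤ qden a n
  | 0 => by simp
  | 1 => qden_pos a 1
  | (n+2) => by
    have h1 := qden_pos a n
    have h2 := qden_ge a (n+1)
    have h3 : 1 ≤ (a (n+1) : ℕ) := (a (n+1)).pos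
    simp only [qden]
    nlinarith

lemma det_cf (a : ℕ → ℕ+) (n : ℕ) :
    (pnum a (n+1) : ℝ) * qden a n - pnum a n * qden a (n+1) = (-1)^n := by
  induction n with
  | zero => simp [pnum, qden]
  | succ n ih =>
    rw [pow_succ, ← ih]
    simp only [pnum, qden]
    push_cast
    ring

lemma cf_rel {x : ℝ} (hx : Irrational x) (h : x ∈ Set.Ioo (0:ℝ) 1) (n : ℕ) :
    x * (qden (cfA x) (n+1) + qden (cfA x) n * gT^[n+1] x)
      = pnum (cfA x) (n+1) + pnum (cfA x) n * gT^[n+1] x := by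
  induction n with
  | zero =>
    have h1 := floor_add_gT h.1.le
    have h2 := cfA_coe hx h 0
    simp only [Function.iterate_zero, id] at h2
    simp [pnum, qden, h2, h1, h.1.ne']
  | succ n ih =>
    have hm := gT_iter_mem hx h (n+1)
    have h1 := floor_add_gT hm.1.le
    rw [← cfA_coe hx h (n+1), ← Function.iterate_succ_apply' gT] at h1
    simp only [pnum, qden]
    push_cast
    set t := gT^[n+1] x
    set s := gT^[n+1+1] x
    have h3 : (((cfA x (n+1) : ℕ) : ℝ) + s) * t = 1 := by
      rw [h1]; exact inv_mul_cancel₀ hm.1.ne'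
    have h4 := congrArg (fun z => z * (((cfA x (n+1) : ℕ) : ℝ) + s)) ih
    linear_combination h4 + (-x * qden (cfA x) n + pnum (cfA x) n) * h3

lemma cfVal_cfA {x : ℝ} (hx : Irrational x) (h : x ∈ Set.Ioo (0:ℝ) 1) :
    cfVal (cfA x) = x := by
  unfold cfVal
  apply Tendsto.limUnder_eq
  rw [← tendsto_add_atTop_iff_nat 1]
  rw [tendsto_iff_norm_sub_tendsto_zero]
  refine squeeze_zero (fun _ => norm_nonneg _) (fun n => ?_) tendsto_one_div_add_atTop_nhds_zero_nat
  have hr := cf_rel hx h n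
  have hd := det_cf (cfA x) n
  have ht := gT_iter_mem hx h (n+1)
  have q1 : (1:ℝ) ≤ qden (cfA x) n := by exact_mod_cast qden_pos _ _
  have q2 : (1:ℝ) ≤ qden (cfA x) (n+1) := by exact_mod_cast qden_pos _ _
  have q3 : ((n+1 : ℕ):ℝ) ≤ qden (cfA x) (n+1) := by exact_mod_cast qden_ge _ _
  push_cast at q3
  set t := gT^[n+1] x
  set q := (qden (cfA x) (n+1) : ℝ)
  set q' := (qden (cfA x) n : ℝ)
  set p := (pnum (cfA x) (n+1) : ℝ)
  set p' := (pnum (cfA x) n : ℝ)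
  have e : (p - x * q) * (q + q' * t) = t * (-1)^n := by
    rw [← hd]; linear_combination (-q) * hr
  have e2 : |p - x * q| * (q + q' * t) = t := by
    have hp : 0 < q + q' * t := by have := ht.1; positivity
    have := congrArg abs e
    rw [abs_mul, abs_mul, abs_pow, abs_of_pos hp, abs_of_pos ht.1] at this
    simpa using this
  have e3 : |p - x * q| ≤ 1 := by
    have := ht.1
    have := ht.2
    have h5 := abs_nonneg (p - x*q)
    have h6 : 0 ≤ q' * t := by positivity
    nlinarith [mul_nonneg h5 h6]
  have e4 : p / q - x = (p - x * q) / q := by field_simp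
  rw [Real.norm_eq_abs, e4, abs_div, abs_of_pos (by linarith : 0 < q)]
  exact div_le_div₀ zero_le_one e3 (by positivity) q3

lemma sum_pow_aux (N : ℕ) : ∑ i ∈ Finset.range N, ((9:ℝ)/10)^(N - i) ≤ 9 := by
  induction N with
  | zero => simp
  | succ N ih =>
    have : ∑ i ∈ Finset.range N, ((9:ℝ)/10)^(N + 1 - i)
        = (9/10) * ∑ i ∈ Finset.range N, ((9:ℝ)/10)^(N - i) := by
      rw [Finset.mul_sum]
      refine Finset.sum_congr rfl fun i hi => ?_
      rw [Finset.mem_range] at hi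
      rw [show N + 1 - i = (N - i) + 1 by omega, pow_succ]; ring
    rw [Finset.sum_range_succ, this]
    simp
    linarith

/-- Strong law under exponentially decaying correlations. -/
lemma slln_aux {Ω : Type*} [MeasurableSpace Ω] (μ : Measure Ω) [IsProbabilityMeasure μ]
    (Z : ℕ → Ω → ℝ) (m C : ℝ) (hC : 0 ≤ C) (h0 : ∀ i ω, 0 ≤ Z i ω)
    (hL : ∀ i, MemLp (Z i) 2 μ) (hm : ∀ i, ∫ ω, Z i ω ∂μ = m)
    (hcov : ∀ i j, i ≤ j → ∫ ω, Z i ω * Z j ω ∂μ ≤ m^2 + C * ((9:ℝ)/10)^(j - i)) :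
    ∀ᵐ ω ∂μ, Tendsto (fun n : ℕ => (1/(n:ℝ)) * ∑ j ∈ Finset.range n, Z j ω) atTop (nhds m) := by
  have hI : ∀ i, Integrable (Z i) μ := fun i => (hL i).integrable one_le_two
  have hLY : ∀ i, MemLp (fun ω => Z i ω - m) 2 μ := fun i => (hL i).sub (memLp_const m)
  have hYY : ∀ i j, Integrable (fun ω => (Z i ω - m) * (Z j ω - m)) μ := fun i j =>
    (hLY i).integrable_mul (hLY j)
  have hZZ : ∀ i j, Integrable (fun ω => Z i ω * Z j ω) μ := fun i j =>
    (hL i).integrable_mul (hL j)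
  have hcov' : ∀ i j, i ≤ j →
      ∫ ω, (Z i ω - m) * (Z j ω - m) ∂μ ≤ C * ((9:ℝ)/10)^(j - i) := by
    intro i j hij
    have e : ∀ ω, (Z i ω - m) * (Z j ω - m) = Z i ω * Z j ω - m * Z i ω - m * Z j ω + m^2 := by
      intro ω; ring
    simp_rw [e]
    have i1 : Integrable (fun ω => Z i ω * Z j ω - m * Z i ω) μ :=
      (hZZ i j).sub ((hI i).const_mul m)
    have i2 : Integrable (fun ω => Z i ω * Z j ω - m * Z i ω - m * Z j ω) μ :=
      i1.sub ((hI j).const_mul m)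
    rw [integral_add i2 (integrable_const _), integral_sub i1 ((hI j).const_mul m),
      integral_sub (hZZ i j) ((hI i).const_mul m), integral_const_mul, integral_const_mul, hm, hm]
    have := hcov i j hij
    simp
    linarith
  set Sg : ℕ → Ω → ℝ := fun N ω => ∑ i ∈ Finset.range N, (Z i ω - m) with hS
  have hSL : ∀ N, MemLp (Sg N) 2 μ := fun N => memLp_finsetSum _ (fun i _ => hLY i)
  have hSI : ∀ N, Integrable (fun ω => (Sg N ω)^2) μ := fun N => (hSL N).integrable_sq
  have hSY : ∀ N, Integrable (fun ω => Sg N ω * (Z N ω - m)) μ := fun N =>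
    (hSL N).integrable_mul (hLY N)
  have hvar : ∀ N : ℕ, ∫ ω, (Sg N ω)^2 ∂μ ≤ 19 * C * N := by
    intro N
    induction N with
    | zero => simp [hS]
    | succ N ih =>
      have e : ∀ ω, (Sg (N+1) ω)^2 = (Sg N ω)^2 + 2 * (Sg N ω * (Z N ω - m))
          + (Z N ω - m) * (Z N ω - m) := by
        intro ω; simp only [hS, Finset.sum_range_succ]; ring
      simp_rw [e]
      have i1 : Integrable (fun ω => (Sg N ω)^2 + 2 * (Sg N ω * (Z N ω - m))) μ :=
        (hSI N).add ((hSY N).const_mul 2)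
      rw [integral_add i1 (hYY N N),
        integral_add (hSI N) ((hSY N).const_mul 2), integral_const_mul]
      have h1 : ∫ ω, Sg N ω * (Z N ω - m) ∂μ ≤ C * 9 := by
        simp only [hS, Finset.sum_mul]
        rw [integral_finsetSum _ (fun i _ => hYY i N)]
        calc _ ≤ ∑ i ∈ Finset.range N, C * ((9:ℝ)/10)^(N - i) :=
              Finset.sum_le_sum fun i hi => hcov' i N (Finset.mem_range.1 hi).le
          _ ≤ _ := by rw [← Finset.mul_sum]; exact mul_le_mul_of_nonneg_left (sum_pow_aux N) hC
      have h2 := hcov' N N le_rfl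
      simp at h2
      push_cast
      linarith
  -- a.e. convergence along squares
  set c : ℕ → ℕ := fun n => (n+1)^2 with hc
  have hsq : ∀ᵐ ω ∂μ, Tendsto (fun n => Sg (c n) ω / (c n : ℝ)) atTop (nhds 0) := by
    have hfin : ∫⁻ ω, ∑' n : ℕ, ENNReal.ofReal ((Sg (c n) ω / (c n : ℝ))^2) ∂μ ≠ ⊤ := by
      rw [lintegral_tsum]
      · have hb : ∀ n : ℕ, ∫⁻ ω, ENNReal.ofReal ((Sg (c n) ω / (c n : ℝ))^2) ∂μ
            ≤ ENNReal.ofReal (19 * C * (1 / ((n:ℝ)+1)^2)) := by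
          intro n
          have hi : Integrable (fun ω => (Sg (c n) ω / (c n : ℝ))^2) μ := by
            simp_rw [div_pow]; exact (hSI _).div_const _
          rw [← ofReal_integral_eq_lintegral_ofReal hi (ae_of_all _ fun _ => sq_nonneg _)]
          apply ENNReal.ofReal_le_ofReal
          simp_rw [div_pow]
          rw [integral_div, div_le_iff₀ (by simp only [hc]; positivity)]
          refine (hvar _).trans (le_of_eq ?_)
          simp only [hc]; push_cast; field_simp
        refine ne_top_of_le_ne_top ?_ (ENNReal.tsum_le_tsum hb)
        apply Summable.tsum_ofReal_ne_top
        apply Summable.mul_left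
        have := (summable_nat_add_iff 1).2 (Real.summable_one_div_nat_pow.2 one_lt_two)
        simpa using this
      · intro n
        have := (hSL (c n)).aestronglyMeasurable.aemeasurable
        fun_prop
    have hae := ae_lt_top' (by
      apply AEMeasurable.tsum
      intro n
      have := (hSL (c n)).aestronglyMeasurable.aemeasurable
      fun_prop) hfin
    filter_upwards [hae] with ω hω
    have h1 := ENNReal.tendsto_atTop_zero_of_tsum_ne_top hω.ne
    have h2 : Tendsto (fun n => (Sg (c n) ω / (c n : ℝ))^2) atTop (nhds 0) := by
      have := (ENNReal.tendsto_toReal ENNReal.zero_ne_top).comp h1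
      simpa [Function.comp_def, ENNReal.toReal_ofReal (sq_nonneg _)] using this
    have h3 := h2.sqrt
    simp only [Real.sqrt_sq_eq_abs, Real.sqrt_zero] at h3
    exact (tendsto_zero_iff_abs_tendsto_zero _).2 h3
  filter_upwards [hsq] with ω hω
  have hmono : Monotone (fun n : ℕ => ∑ j ∈ Finset.range n, Z j ω) := by
    apply monotone_nat_of_le_succ
    intro n
    rw [Finset.sum_range_succ]
    linarith [h0 n ω]
  have hct : Tendsto c atTop atTop := by
    refine tendsto_atTop_mono (fun n => ?_) tendsto_id
    simp only [hc, id]; nlinarith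
  have key := tendsto_div_of_monotone_of_exists_subseq_tendsto_div
    (fun n : ℕ => ∑ j ∈ Finset.range n, Z j ω) m hmono (fun a ha => ⟨c, ?_, hct, ?_⟩)
  · refine key.congr fun n => ?_
    rw [div_eq_inv_mul, one_div]
  · have hlim : Tendsto (fun n : ℕ => (1 + 1 / ((n:ℝ)+1))^2) atTop (nhds 1) := by
      have := (tendsto_one_div_add_atTop_nhds_zero_nat (𝕜 := ℝ)).const_add 1 |>.pow 2
      simpa using this
    filter_upwards [hlim.eventually_lt_const ha] with n hn
    simp only [hc]
    push_cast
    have : ((n:ℝ)+1+1)^2 = (1 + 1 / ((n:ℝ)+1))^2 * ((n:ℝ)+1)^2 := by field_simp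
    rw [this]
    exact mul_le_mul_of_nonneg_right hn.le (by positivity)
  · have := hω.add_const m
    rw [zero_add] at this
    refine this.congr fun n => ?_
    have : (c n : ℝ) ≠ 0 := by simp only [hc]; positivity
    simp only [hS, Finset.sum_sub_distrib, Finset.sum_const, Finset.card_range, nsmul_eq_mul]
    field_simp
    ring

/-- weights -/
noncomputable def gw (j : ℕ) (y : ℝ) : ℝ := (1 + y) / (((j:ℝ) + 1 + y) * ((j:ℝ) + 2 + y))
/-- inverse branches -/
noncomputable def gu (j : ℕ) (y : ℝ) : ℝ := ((j:ℝ) + 1 + y)⁻¹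

lemma gw_nonneg (j : ℕ) {y : ℝ} (hy : y ∈ Set.Icc (0:ℝ) 1) : 0 ≤ gw j y := by
  have := hy.1
  unfold gw; positivity

lemma gu_mem (j : ℕ) {y : ℝ} (hy : y ∈ Set.Icc (0:ℝ) 1) : gu j y ∈ Set.Icc (0:ℝ) 1 := by
  have := hy.1
  have hj : (0:ℝ) ≤ j := Nat.cast_nonneg j
  refine ⟨by unfold gu; positivity, ?_⟩
  unfold gu
  exact inv_le_one_of_one_le₀ (by linarith)

lemma gw_hasSum {y : ℝ} (hy : y ∈ Set.Icc (0:ℝ) 1) : HasSum (fun j => gw j y) 1 := by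
  have h0 := hy.1
  rw [hasSum_iff_tendsto_nat_of_nonneg (fun j => gw_nonneg j hy)]
  have e : ∀ n : ℕ, ∑ j ∈ Finset.range n, gw j y = 1 - (1 + y) / ((n:ℝ) + 1 + y) := by
    intro n
    induction n with
    | zero => simp; rw [div_self (by positivity)]; simp
    | succ n ih =>
      rw [Finset.sum_range_succ, ih, gw]
      push_cast
      have h1 : (n:ℝ) + 1 + y ≠ 0 := by positivity
      have h2 : (n:ℝ) + 2 + y ≠ 0 := by positivity
      have h3 : (n:ℝ) + 1 + 1 + y ≠ 0 := by positivity
      field_simp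
      ring
  simp_rw [e]
  have : Tendsto (fun n : ℕ => (1 + y) / ((n:ℝ) + 1 + y)) atTop (nhds 0) := by
    apply Tendsto.const_div_atTop
    apply tendsto_atTop_add_const_right
    apply tendsto_atTop_add_const_right
    exact tendsto_natCast_atTop_atTop
  simpa using this.const_sub 1

lemma gw_sub (j : ℕ) {x y : ℝ} (hx : x ∈ Set.Icc (0:ℝ) 1) (hy : y ∈ Set.Icc (0:ℝ) 1) :
    gw j x - gw j y = (x - y) * (((j:ℝ)^2 + j - 1 - (x + y) - x * y) /
      ((((j:ℝ) + 1 + x) * ((j:ℝ) + 2 + x)) * (((j:ℝ) + 1 + y) * ((j:ℝ) + 2 + y)))) := by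
  have := hx.1
  have := hy.1
  unfold gw
  field_simp
  ring

lemma gw_lip (j : ℕ) {x y : ℝ} (hx : x ∈ Set.Icc (0:ℝ) 1) (hy : y ∈ Set.Icc (0:ℝ) 1) :
    |gw j x - gw j y| ≤ |x - y| * (4 / (((j:ℝ) + 1) * ((j:ℝ) + 2))) := by
  have hx0 := hx.1
  have hy0 := hy.1
  have hx1 := hx.2
  have hy1 := hy.2
  have hj : (0:ℝ) ≤ j := Nat.cast_nonneg j
  rw [gw_sub j hx hy, abs_mul, abs_div]
  refine mul_le_mul_of_nonneg_left ?_ (abs_nonneg _)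
  set A : ℝ := ((j:ℝ) + 1) * ((j:ℝ) + 2) with hA
  have hApos : 0 < A := by positivity
  have hn : |(j:ℝ)^2 + j - 1 - (x + y) - x * y| ≤ 4 * A := by
    have : 0 ≤ x * y := by positivity
    have : x * y ≤ 1 := by nlinarith
    rw [abs_le]; constructor <;> simp only [hA] <;> nlinarith
  have hd1 : A ≤ ((j:ℝ) + 1 + x) * ((j:ℝ) + 2 + x) := by
    simp only [hA]; exact mul_le_mul (by linarith) (by linarith) (by positivity) (by positivity)
  have hd2 : A ≤ ((j:ℝ) + 1 + y) * ((j:ℝ) + 2 + y) := by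
    simp only [hA]; exact mul_le_mul (by linarith) (by linarith) (by positivity) (by positivity)
  have hd : A * A ≤ (((j:ℝ) + 1 + x) * ((j:ℝ) + 2 + x)) * (((j:ℝ) + 1 + y) * ((j:ℝ) + 2 + y)) := by
    gcongr
  rw [abs_of_pos (lt_of_lt_of_le (by positivity) hd)]
  calc _ ≤ 4 * A / (A * A) := by gcongr
    _ = 4 / A := by field_simp

/-- auxiliary telescoping sequence -/
noncomputable def gD (j : ℕ) : ℝ := if j = 0 then 9/10 else (3/5) / ((j:ℝ) + 1)^2

lemma gD_hasSum (hn : ∀ j, 0 ≤ gD j - gD (j+1)) : HasSum (fun j => gD j - gD (j+1)) (9/10) := by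
  rw [hasSum_iff_tendsto_nat_of_nonneg hn]
  simp_rw [Finset.sum_range_sub']
  have h : Tendsto gD atTop (nhds 0) := by
    have h1 : Tendsto (fun j : ℕ => (3/5 : ℝ) / ((j:ℝ) + 1)^2) atTop (nhds 0) := by
      apply Tendsto.const_div_atTop
      apply (tendsto_pow_atTop two_ne_zero).comp
      apply tendsto_atTop_add_const_right
      exact tendsto_natCast_atTop_atTop
    refine h1.congr' ?_
    filter_upwards [eventually_ne_atTop 0] with j hj
    simp [gD, hj]
  have := h.const_sub (9/10)
  simpa [gD] using this

/-- coefficient estimate -/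
lemma coef_bound (j : ℕ) {x y : ℝ} (hx : x ∈ Set.Icc (0:ℝ) 1) (hy : y ∈ Set.Icc (0:ℝ) 1) :
    gw j x * (((j:ℝ) + 1 + x) * ((j:ℝ) + 1 + y))⁻¹ +
      |((j:ℝ)^2 + j - 1 - (x + y) - x * y) /
      ((((j:ℝ) + 1 + x) * ((j:ℝ) + 2 + x)) * (((j:ℝ) + 1 + y) * ((j:ℝ) + 2 + y)))| * gu j y
      ≤ gD j - gD (j+1) := by
  have hx0 := hx.1
  have hy0 := hy.1
  have hx1 := hx.2
  have hy1 := hy.2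
  have hj : (0:ℝ) ≤ j := Nat.cast_nonneg j
  have hxy : 0 ≤ x * y := by positivity
  have hxy1 : x * y ≤ 1 := by nlinarith
  rcases Nat.eq_zero_or_pos j with rfl | hjp
  · have e1 : gw 0 x * (((0:ℕ):ℝ) + 1 + x)⁻¹ = ((1+x) * (2 + x))⁻¹ := by
      unfold gw; push_cast; field_simp; ring
    have e2 : (((0:ℕ):ℝ)^2 + ((0:ℕ):ℝ) - 1 - (x + y) - x * y) = - ((1 + x) * (1 + y)) := by
      push_cast; ring
    have hD : gD 0 - gD (0+1) = 1/2 + 1/4 := by simp [gD]; norm_num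
    rw [hD, e2, mul_inv, ← mul_assoc, e1]
    apply add_le_add
    · rw [← mul_inv, ← one_div]
      apply one_div_le_one_div_of_le (by norm_num)
      push_cast
      nlinarith [mul_nonneg hx0 hx0, mul_nonneg (mul_nonneg hx0 hx0) hy0]
    · unfold gu
      have e3 : (-((1 + x) * (1 + y)) / (((((0:ℕ):ℝ) + 1 + x) * (((0:ℕ):ℝ) + 2 + x)) *
          ((((0:ℕ):ℝ) + 1 + y) * (((0:ℕ):ℝ) + 2 + y)))) = -((2 + x) * (2 + y))⁻¹ := by
        push_cast; simp only [zero_add]; field_simp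
      rw [e3, abs_neg, abs_of_nonneg (by positivity), ← mul_inv, ← one_div]
      apply one_div_le_one_div_of_le (by norm_num)
      push_cast
      nlinarith [mul_nonneg hxy hy0, mul_nonneg hy0 hy0]
  · have hj1 : (1:ℝ) ≤ j := by exact_mod_cast hjp
    have hD : gD j - gD (j+1) = (3/5) / ((j:ℝ) + 1)^2 - (3/5) / ((j:ℝ) + 2)^2 := by
      have : j ≠ 0 := by omega
      simp only [gD, this, if_false]
      simp
      ring
    have b1 : gw j x * (((j:ℝ) + 1 + x) * ((j:ℝ) + 1 + y))⁻¹
        ≤ 2 / (((j:ℝ)+1)^2 * ((j:ℝ)+2)^2) := by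
      have f1 : (1 + x) / ((j:ℝ) + 1 + x) ≤ 2 / ((j:ℝ) + 2) := by
        rw [div_le_div_iff₀ (by positivity) (by positivity)]; nlinarith
      have f2 : (((j:ℝ) + 2 + x) * (((j:ℝ) + 1 + x) * ((j:ℝ) + 1 + y)))⁻¹
          ≤ (((j:ℝ) + 2) * (((j:ℝ) + 1) * ((j:ℝ) + 1)))⁻¹ := by
        apply inv_anti₀ (by positivity)
        exact mul_le_mul (by linarith) (mul_le_mul (by linarith) (by linarith) (by positivity)
          (by positivity)) (by positivity) (by positivity)
      calc gw j x * (((j:ℝ) + 1 + x) * ((j:ℝ) + 1 + y))⁻¹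
          = (1 + x) / ((j:ℝ) + 1 + x) *
            (((j:ℝ) + 2 + x) * (((j:ℝ) + 1 + x) * ((j:ℝ) + 1 + y)))⁻¹ := by
            unfold gw; field_simp
        _ ≤ 2 / ((j:ℝ) + 2) * (((j:ℝ) + 2) * (((j:ℝ) + 1) * ((j:ℝ) + 1)))⁻¹ := by gcongr
        _ = _ := by field_simp
    have b2 : |((j:ℝ)^2 + j - 1 - (x + y) - x * y) /
      ((((j:ℝ) + 1 + x) * ((j:ℝ) + 2 + x)) * (((j:ℝ) + 1 + y) * ((j:ℝ) + 2 + y)))| * gu j y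
        ≤ j / (((j:ℝ)+1)^2 * ((j:ℝ)+2)^2) := by
      have hn : |(j:ℝ)^2 + j - 1 - (x + y) - x * y| ≤ (j:ℝ) * ((j:ℝ) + 1) := by
        rw [abs_le]; constructor <;> nlinarith
      have hd : (((j:ℝ)+1) * ((j:ℝ)+2)) * (((j:ℝ)+1) * ((j:ℝ)+2)) ≤
        (((j:ℝ) + 1 + x) * ((j:ℝ) + 2 + x)) * (((j:ℝ) + 1 + y) * ((j:ℝ) + 2 + y)) := by
        exact mul_le_mul (mul_le_mul (by linarith) (by linarith) (by positivity) (by positivity))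
          (mul_le_mul (by linarith) (by linarith) (by positivity) (by positivity))
          (by positivity) (by positivity)
      have hu : gu j y ≤ ((j:ℝ)+1)⁻¹ := by
        unfold gu; apply inv_anti₀ (by positivity); linarith
      rw [abs_div, abs_of_pos (lt_of_lt_of_le (by positivity) hd)]
      calc _ ≤ (j:ℝ) * ((j:ℝ) + 1) / ((((j:ℝ)+1) * ((j:ℝ)+2)) * (((j:ℝ)+1) * ((j:ℝ)+2))) * ((j:ℝ)+1)⁻¹ := by
            have := (gu_mem j hy).1
            gcongr
        _ = _ := by field_simp
    refine (add_le_add b1 b2).trans ?_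
    rw [hD, ← add_div, div_sub_div _ _ (by positivity) (by positivity)]
    gcongr
    nlinarith

lemma gD_nonneg (j : ℕ) : 0 ≤ gD j - gD (j+1) := by
  have h : (0:ℝ) ∈ Set.Icc (0:ℝ) 1 := ⟨le_rfl, zero_le_one⟩
  refine le_trans ?_ (coef_bound j h h)
  have := gw_nonneg j h
  have := (gu_mem j h).1
  positivity

lemma contraction (h : ℝ → ℝ) (L : ℝ)
    (hL : ∀ x ∈ Set.Icc (0:ℝ) 1, ∀ y ∈ Set.Icc (0:ℝ) 1, |h x - h y| ≤ L * |x - y|) :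
    (∀ y ∈ Set.Icc (0:ℝ) 1, Summable (fun j => gw j y * h (gu j y))) ∧
    ∀ x ∈ Set.Icc (0:ℝ) 1, ∀ y ∈ Set.Icc (0:ℝ) 1,
      |(∑' j, gw j x * h (gu j x)) - ∑' j, gw j y * h (gu j y)| ≤ (9/10) * L * |x - y| := by
  have z : (0:ℝ) ∈ Set.Icc (0:ℝ) 1 := ⟨le_rfl, zero_le_one⟩
  have hL0 : 0 ≤ L := by
    have := hL 0 z 1 ⟨zero_le_one, le_rfl⟩
    simp at this
    exact (abs_nonneg _).trans this
  have hs0 : ∀ y ∈ Set.Icc (0:ℝ) 1, Summable (fun j => gw j y * (h (gu j y) - h 0)) := by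
    intro y hy
    refine Summable.of_norm_bounded ((gw_hasSum hy).summable.mul_right L) fun j => ?_
    rw [Real.norm_eq_abs, abs_mul, abs_of_nonneg (gw_nonneg j hy)]
    have h1 := hL _ (gu_mem j hy) 0 z
    have h2 := gu_mem j hy
    rw [sub_zero, abs_of_nonneg h2.1] at h1
    refine mul_le_mul_of_nonneg_left ?_ (gw_nonneg j hy)
    nlinarith [h2.2]
  have hdec : ∀ y ∈ Set.Icc (0:ℝ) 1, HasSum (fun j => gw j y * h (gu j y))
      ((∑' j, gw j y * (h (gu j y) - h 0)) + h 0) := by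
    intro y hy
    have := (hs0 y hy).hasSum.add ((gw_hasSum hy).mul_right (h 0))
    rw [one_mul] at this
    refine this.congr_fun ?_ |> fun t => t
    intro j; ring
  refine ⟨fun y hy => (hdec y hy).summable, fun x hx y hy => ?_⟩
  rw [(hdec x hx).tsum_eq, (hdec y hy).tsum_eq, add_sub_add_right_eq_sub,
    ← (hs0 x hx).tsum_sub (hs0 y hy)]
  have hsum := (gD_hasSum gD_nonneg).mul_right (L * |x - y|)
  rw [← mul_assoc] at hsum
  rw [← Real.norm_eq_abs]
  refine tsum_of_norm_bounded hsum fun j => ?_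
  have hx0 := hx.1
  have hy0 := hy.1
  have e : gw j x * (h (gu j x) - h 0) - gw j y * (h (gu j y) - h 0)
    = gw j x * (h (gu j x) - h (gu j y)) + (gw j x - gw j y) * (h (gu j y) - h 0) := by ring
  have d1 : |h (gu j x) - h (gu j y)| ≤ L * (|x - y| * (((j:ℝ) + 1 + x) * ((j:ℝ) + 1 + y))⁻¹) := by
    refine (hL _ (gu_mem j hx) _ (gu_mem j hy)).trans (le_of_eq ?_)
    congr 1
    have : gu j x - gu j y = (y - x) * (((j:ℝ) + 1 + x) * ((j:ℝ) + 1 + y))⁻¹ := by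
      unfold gu; field_simp; ring
    rw [this, abs_mul, abs_sub_comm, abs_of_nonneg (a := (_)⁻¹) (by positivity)]
  have d2 : |h (gu j y) - h 0| ≤ L * gu j y := by
    have h1 := hL _ (gu_mem j hy) 0 z
    rwa [sub_zero, abs_of_nonneg (gu_mem j hy).1] at h1
  rw [e, Real.norm_eq_abs]
  refine (abs_add_le _ _).trans ?_
  rw [abs_mul, abs_mul, abs_of_nonneg (gw_nonneg j hx), gw_sub j hx hy, abs_mul]
  refine le_trans (add_le_add (mul_le_mul_of_nonneg_left d1 (gw_nonneg j hx))
    (mul_le_mul_of_nonneg_left d2 (by positivity))) ?_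
  refine le_trans (le_of_eq ?_) (mul_le_mul_of_nonneg_right (coef_bound j hx hy)
    (by positivity : 0 ≤ L * |x - y|))
  ring

/-- density of the Gauss measure -/
noncomputable def gdens (x : ℝ) : ENNReal := ENNReal.ofReal (((1 + x) * Real.log 2)⁻¹)

lemma gdens_meas : Measurable gdens := by unfold gdens; fun_prop

/-- Gauss measure -/
noncomputable def gmu : Measure ℝ := (volume.restrict (Set.Ioc (0:ℝ) 1)).withDensity gdens

lemma lint_gmu {F : ℝ → ENNReal} (hF : Measurable F) :
    ∫⁻ x, F x ∂gmu = ∫⁻ x in Set.Ioc (0:ℝ) 1, gdens x * F x := by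
  unfold gmu
  rw [lintegral_withDensity_eq_lintegral_mul _ gdens_meas hF]
  rfl

/-- rank one cylinders -/
def gI (j : ℕ) : Set ℝ := Set.Ioc (((j:ℝ) + 2)⁻¹) (((j:ℝ) + 1)⁻¹)

lemma mem_gI (j : ℕ) (x : ℝ) : x ∈ gI j ↔ 0 < x ∧ ⌊x⁻¹⌋₊ = j + 1 := by
  unfold gI
  constructor
  · rintro ⟨h1, h2⟩
    have hx : 0 < x := lt_trans (by positivity) h1
    refine ⟨hx, ?_⟩
    rw [Nat.floor_eq_iff (by positivity)]
    push_cast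
    constructor
    · rw [le_inv_comm₀ (by positivity) hx]; exact h2
    · rw [inv_lt_comm₀ hx (by positivity)]
      rw [show (j:ℝ) + 1 + 1 = j + 2 by ring]; exact h1
  · rintro ⟨hx, h⟩
    rw [Nat.floor_eq_iff (by positivity)] at h
    push_cast at h
    constructor
    · rw [inv_lt_comm₀ (by positivity) hx]; linarith [h.2]
    · rw [← le_inv_comm₀ (by positivity) hx]; exact h.1

lemma gI_union : (⋃ j, gI j) = Set.Ioc (0:ℝ) 1 := by
  ext x
  simp only [Set.mem_iUnion, mem_gI]
  constructor
  · rintro ⟨j, hx, h⟩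
    refine ⟨hx, ?_⟩
    rw [Nat.floor_eq_iff (by positivity)] at h
    push_cast at h
    have : 1 ≤ x⁻¹ := le_trans (by linarith [(Nat.cast_nonneg j : (0:ℝ) ≤ j)]) h.1
    exact (one_le_inv₀ hx).1 this
  · rintro ⟨hx, h1⟩
    have : 1 ≤ ⌊x⁻¹⌋₊ := by rw [Nat.one_le_floor_iff]; exact (one_le_inv₀ hx).2 h1
    exact ⟨⌊x⁻¹⌋₊ - 1, hx, by omega⟩

lemma gI_disj : Pairwise (Function.onFun Disjoint gI) := by
  intro i j hij
  rw [Function.onFun, Set.disjoint_left]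
  intro x hi hj
  rw [mem_gI] at hi hj
  have := hi.2.symm.trans hj.2
  omega

lemma gI_meas (j : ℕ) : MeasurableSet (gI j) := measurableSet_Ioc

lemma gu_image (j : ℕ) : gu j '' Set.Ico (0:ℝ) 1 = gI j := by
  ext x
  rw [mem_gI]
  constructor
  · rintro ⟨y, hy, rfl⟩
    have := hy.1
    unfold gu
    refine ⟨by positivity, ?_⟩
    rw [inv_inv, Nat.floor_eq_iff (by positivity)]
    push_cast
    constructor <;> linarith [hy.2]
  · rintro ⟨hx, h⟩
    rw [Nat.floor_eq_iff (by positivity)] at h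
    push_cast at h
    refine ⟨x⁻¹ - (j + 1), ⟨by linarith [h.1], by linarith [h.2]⟩, ?_⟩
    unfold gu
    simp

lemma gT_gu (j : ℕ) {y : ℝ} (hy : y ∈ Set.Ico (0:ℝ) 1) : gT (gu j y) = y := by
  unfold gT gu
  rw [inv_inv]
  have : (j:ℝ) + 1 + y = ((j+1 : ℕ) : ℝ) + y := by push_cast; ring
  rw [this, Int.fract_natCast_add, Int.fract_eq_self]
  exact hy

lemma lint_branch (j : ℕ) (F : ℝ → ENNReal) :
    ∫⁻ x in gI j, F x = ∫⁻ y in Set.Ico (0:ℝ) 1,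
      ENNReal.ofReal ((((j:ℝ) + 1 + y)^2)⁻¹) * F (gu j y) := by
  rw [← gu_image]
  have hd : ∀ y ∈ Set.Ico (0:ℝ) 1,
      HasDerivWithinAt (gu j) (-(((j:ℝ) + 1 + y)^2)⁻¹) (Set.Ico (0:ℝ) 1) y := by
    intro y hy
    have h0 := hy.1
    have h1 : HasDerivAt (fun y : ℝ => (j:ℝ) + 1 + y) 1 y := (hasDerivAt_id y).const_add _
    have h2 := h1.inv (by positivity : (j:ℝ) + 1 + y ≠ 0)
    have h3 : HasDerivAt (gu j) (-(((j:ℝ) + 1 + y)^2)⁻¹) y := by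
      have e : -(((j:ℝ) + 1 + y)^2)⁻¹ = -1 / ((j:ℝ) + 1 + y)^2 := by rw [neg_div, one_div]
      rw [e]
      exact h2
    exact h3.hasDerivWithinAt
  have hinj : Set.InjOn (gu j) (Set.Ico (0:ℝ) 1) := by
    intro a ha b hb hab
    rw [← gT_gu j ha, ← gT_gu j hb, hab]
  rw [lintegral_image_eq_lintegral_abs_deriv_mul measurableSet_Ico hd hinj]
  refine setLIntegral_congr_fun measurableSet_Ico fun y hy => ?_
  have := hy.1
  rw [abs_neg, abs_of_nonneg (by positivity)]

/-- transfer operator -/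
noncomputable def gP (F : ℝ → ENNReal) (y : ℝ) : ENNReal :=
  ∑' j : ℕ, ENNReal.ofReal (gw j y) * F (gu j y)

lemma gw_meas (j : ℕ) : Measurable (gw j) := by unfold gw; fun_prop
lemma gu_meas (j : ℕ) : Measurable (gu j) := by unfold gu; fun_prop

lemma gP_meas {F : ℝ → ENNReal} (hF : Measurable F) : Measurable (gP F) := by
  unfold gP
  apply Measurable.tsum
  intro j
  exact (gw_meas j).ennreal_ofReal.mul (hF.comp (gu_meas j))

lemma duality {F G : ℝ → ENNReal} (hF : Measurable F) (hG : Measurable G) :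
    ∫⁻ x, F x * G (gT x) ∂gmu = ∫⁻ y, gP F y * G y ∂gmu := by
  have hGT := hG.comp gT_measurable
  rw [lint_gmu (F := fun x => F x * G (gT x)) (hF.mul hGT),
    lint_gmu (F := fun y => gP F y * G y) ((gP_meas hF).mul hG)]
  rw [← gI_union, lintegral_iUnion gI_meas gI_disj, gI_union]
  simp_rw [lint_branch]
  rw [← lintegral_tsum, restrict_Ico_eq_restrict_Ioc]
  · rw [← restrict_Ico_eq_restrict_Ioc]
    refine setLIntegral_congr_fun measurableSet_Ico fun y hy => ?_
    have hy0 := hy.1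
    have hlog : 0 < Real.log 2 := Real.log_pos one_lt_two
    simp only [gP]
    rw [← ENNReal.tsum_mul_right, ← ENNReal.tsum_mul_left]
    refine tsum_congr fun j => ?_
    rw [gT_gu j hy]
    have key : ENNReal.ofReal ((((j:ℝ) + 1 + y)^2)⁻¹) * gdens (gu j y)
        = gdens y * ENNReal.ofReal (gw j y) := by
      unfold gdens gu gw
      rw [← ENNReal.ofReal_mul (by positivity), ← ENNReal.ofReal_mul (by positivity)]
      congr 1
      field_simp
      ring
    rw [← mul_assoc, key]
    ring
  · intro j
    have h1 := ((gdens_meas.mul (hF.mul hGT)).comp (gu_meas j))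
    refine (Measurable.mul (by fun_prop) h1).aemeasurable

lemma lint_Ioc {a b : ℝ} (ha : 0 ≤ a) (hab : a ≤ b) :
    ∫⁻ x in Set.Ioc a b, gdens x
      = ENNReal.ofReal ((Real.log (1 + b) - Real.log (1 + a)) / Real.log 2) := by
  have hlog : 0 < Real.log 2 := Real.log_pos one_lt_two
  have hcont : ContinuousOn (fun x : ℝ => ((1 + x) * Real.log 2)⁻¹) (Set.uIcc a b) := by
    rw [Set.uIcc_of_le hab]
    apply ContinuousOn.inv₀ (by fun_prop)
    intro x hx
    have : 0 ≤ x := ha.trans hx.1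
    positivity
  have hintg := hcont.intervalIntegrable (μ := volume)
  have hd : ∀ x ∈ Set.uIcc a b, HasDerivAt (fun x : ℝ => Real.log (1 + x) / Real.log 2)
      (((1 + x) * Real.log 2)⁻¹) x := by
    intro x hx
    rw [Set.uIcc_of_le hab] at hx
    have : 0 ≤ x := ha.trans hx.1
    have h1 : HasDerivAt (fun x : ℝ => 1 + x) 1 x := (hasDerivAt_id x).const_add _
    have h2 := (h1.log (by positivity)).div_const (Real.log 2)
    have e : ((1 + x) * Real.log 2)⁻¹ = 1 / (1 + x) / Real.log 2 := by field_simp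
    rw [e]
    exact h2
  have hI := intervalIntegral.integral_eq_sub_of_hasDerivAt hd hintg
  rw [intervalIntegral.integral_of_le hab] at hI
  unfold gdens
  rw [← ofReal_integral_eq_lintegral_ofReal, hI]
  · congr 1; ring
  · exact (intervalIntegrable_iff_integrableOn_Ioc_of_le hab).1 hintg
  · filter_upwards [ae_restrict_mem measurableSet_Ioc] with x hx
    have : 0 ≤ x := ha.trans hx.1.le
    simp only [Pi.zero_apply]
    positivity

instance gmu_prob : IsProbabilityMeasure gmu := by
  constructor
  have := lint_gmu (F := fun _ => 1) measurable_const
  simp only [lintegral_one, mul_one] at this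
  rw [this, lint_Ioc le_rfl zero_le_one]
  have hlog : 0 < Real.log 2 := Real.log_pos one_lt_two
  norm_num

lemma gP_one {y : ℝ} (hy : y ∈ Set.Icc (0:ℝ) 1) : gP (fun _ => 1) y = 1 := by
  unfold gP
  simp only [mul_one]
  rw [← ENNReal.ofReal_tsum_of_nonneg (fun j => gw_nonneg j hy) (gw_hasSum hy).summable,
    (gw_hasSum hy).tsum_eq, ENNReal.ofReal_one]

lemma ae_gmu_mem : ∀ᵐ x ∂gmu, x ∈ Set.Ioc (0:ℝ) 1 := by
  have h : ∀ᵐ x ∂(volume.restrict (Set.Ioc (0:ℝ) 1)), x ∈ Set.Ioc (0:ℝ) 1 :=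
    ae_restrict_mem measurableSet_Ioc
  exact (withDensity_absolutelyContinuous _ gdens).ae_le h

lemma gT_inv {G : ℝ → ENNReal} (hG : Measurable G) :
    ∫⁻ x, G (gT x) ∂gmu = ∫⁻ x, G x ∂gmu := by
  have := duality (F := fun _ => 1) measurable_const hG
  simp only [one_mul] at this
  rw [this]
  apply lintegral_congr_ae
  filter_upwards [ae_gmu_mem] with y hy
  rw [gP_one ⟨hy.1.le, hy.2⟩, one_mul]

lemma gT_iter_meas (n : ℕ) : Measurable (gT^[n]) := gT_measurable.iterate n

lemma gT_iter_inv {G : ℝ → ENNReal} (hG : Measurable G) (n : ℕ) :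
    ∫⁻ x, G (gT^[n] x) ∂gmu = ∫⁻ x, G x ∂gmu := by
  induction n with
  | zero => simp
  | succ n ih =>
    rw [← ih]
    simp_rw [Function.iterate_succ_apply]
    exact gT_inv (G := fun x => G (gT^[n] x)) (hG.comp (gT_iter_meas n))

lemma gP_int {F : ℝ → ENNReal} (hF : Measurable F) : ∫⁻ x, gP F x ∂gmu = ∫⁻ x, F x ∂gmu := by
  have := duality hF (G := fun _ => 1) measurable_const
  simp only [mul_one] at this
  exact this.symm

lemma decay {G : ℝ → ENNReal} (hG : Measurable G) (n : ℕ) :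
    ∀ (H : ℝ → ENNReal) (h : ℝ → ℝ) (L : ℝ), Measurable H → (∀ y ∈ Set.Icc (0:ℝ) 1, 0 ≤ h y) →
      (∀ y ∈ Set.Icc (0:ℝ) 1, H y = ENNReal.ofReal (h y)) →
      (∀ x ∈ Set.Icc (0:ℝ) 1, ∀ y ∈ Set.Icc (0:ℝ) 1, |h x - h y| ≤ L * |x - y|) →
      ∫⁻ x, H x * G (gT^[n] x) ∂gmu ≤
        (∫⁻ x, H x ∂gmu + ENNReal.ofReal (L * (9/10)^n)) * ∫⁻ x, G x ∂gmu := by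
  induction n with
  | zero =>
    intro H h L hH h0 hHh hL
    have hL0 : 0 ≤ L := by
      have := hL 0 ⟨le_rfl, zero_le_one⟩ 1 ⟨zero_le_one, le_rfl⟩
      simp at this
      exact (abs_nonneg _).trans this
    rw [← lintegral_const_mul _ hG]
    apply lintegral_mono_ae
    filter_upwards [ae_gmu_mem] with y hy
    have hy' : y ∈ Set.Icc (0:ℝ) 1 := ⟨hy.1.le, hy.2⟩
    simp only [Function.iterate_zero, id, pow_zero, mul_one]
    gcongr
    calc H y = ∫⁻ _, H y ∂gmu := by simp
      _ ≤ ∫⁻ x, (H x + ENNReal.ofReal L) ∂gmu := by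
        apply lintegral_mono_ae
        filter_upwards [ae_gmu_mem] with x hx
        have hx' : x ∈ Set.Icc (0:ℝ) 1 := ⟨hx.1.le, hx.2⟩
        rw [hHh x hx', hHh y hy', ← ENNReal.ofReal_add (h0 x hx') hL0]
        apply ENNReal.ofReal_le_ofReal
        have h1 := (abs_le.1 (hL y hy' x hx')).2
        have h2 : |y - x| ≤ 1 := by
          rw [abs_le]; constructor <;> linarith [hx'.1, hx'.2, hy'.1, hy'.2]
        nlinarith
      _ = _ := by rw [lintegral_add_left hH]; simp
  | succ n ih =>
    intro H h L hH h0 hHh hL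
    obtain ⟨hs, hc⟩ := contraction h L hL
    have hn : ∀ y ∈ Set.Icc (0:ℝ) 1, ∀ j, 0 ≤ gw j y * h (gu j y) := fun y hy j =>
      mul_nonneg (gw_nonneg j hy) (h0 _ (gu_mem j hy))
    have := ih (gP H) (fun y => ∑' j, gw j y * h (gu j y)) (9/10 * L) (gP_meas hH)
      (fun y hy => tsum_nonneg (hn y hy)) (fun y hy => by
        unfold gP
        rw [ENNReal.ofReal_tsum_of_nonneg (hn y hy) (hs y hy)]
        refine tsum_congr fun j => ?_
        rw [ENNReal.ofReal_mul (gw_nonneg j hy), hHh _ (gu_mem j hy)]) hc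
    rw [gP_int hH, ← duality hH (G := fun x => G (gT^[n] x)) (hG.comp (gT_iter_meas n))] at this
    simp_rw [Function.iterate_succ_apply]
    rw [show L * (9/10)^(n+1) = 9/10 * L * (9/10)^n by ring]
    exact this

/-- measure of cylinders -/
noncomputable def gp (j : ℕ) : ℝ := Real.log (1 + 1 / (((j:ℝ)+1) * ((j:ℝ)+3))) / Real.log 2

lemma gp_nonneg (j : ℕ) : 0 ≤ gp j := by
  unfold gp
  have hlog : 0 < Real.log 2 := Real.log_pos one_lt_two
  have : 0 ≤ 1 / (((j:ℝ)+1) * ((j:ℝ)+3)) := by positivity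
  exact div_nonneg (Real.log_nonneg (by linarith)) hlog.le

lemma gp_le (j : ℕ) : gp j ≤ 2 / (((j:ℝ)+1) * ((j:ℝ)+2)) := by
  unfold gp
  have hlog : 1/2 < Real.log 2 := by have := Real.log_two_gt_d9; linarith
  rw [div_le_iff₀ (by linarith)]
  have h0 : 0 ≤ 1 / (((j:ℝ)+1) * ((j:ℝ)+3)) := by positivity
  have h1 := Real.log_le_sub_one_of_pos (by linarith : 0 < 1 + 1 / (((j:ℝ)+1) * ((j:ℝ)+3)))
  have h2 : 1 / (((j:ℝ)+1) * ((j:ℝ)+3)) ≤ 1 / (((j:ℝ)+1) * ((j:ℝ)+2)) := by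
    gcongr; norm_num
  have h3 : 1 / (((j:ℝ)+1) * ((j:ℝ)+2)) = 2 / (((j:ℝ)+1) * ((j:ℝ)+2)) * (1/2) := by ring
  have h4 : 2 / (((j:ℝ)+1) * ((j:ℝ)+2)) * (1/2) ≤ 2 / (((j:ℝ)+1) * ((j:ℝ)+2)) * Real.log 2 := by
    gcongr
  linarith

lemma lint_gI (j : ℕ) : ∫⁻ x in gI j, gdens x = ENNReal.ofReal (gp j) := by
  unfold gI
  rw [lint_Ioc (by positivity) (by gcongr; norm_num)]
  congr 1
  unfold gp
  congr 1
  rw [← Real.log_div (by positivity) (by positivity)]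
  congr 1
  field_simp
  ring

lemma lint_floor (g : ℕ → ENNReal) :
    ∫⁻ x, g ⌊x⁻¹⌋₊ ∂gmu = ∑' j, g (j+1) * ENNReal.ofReal (gp j) := by
  have hg : Measurable (fun x : ℝ => g ⌊x⁻¹⌋₊) :=
    (measurable_from_nat (f := g)).comp (Nat.measurable_floor.comp measurable_inv)
  rw [lint_gmu hg, ← gI_union, lintegral_iUnion gI_meas gI_disj]
  refine tsum_congr fun j => ?_
  rw [← lint_gI, mul_comm, ← lintegral_mul_const _ gdens_meas]
  refine setLIntegral_congr_fun (gI_meas j) fun x hx => ?_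
  rw [((mem_gI j x).1 hx).2]

lemma sum_aux (k : ℕ) (g : ℕ → ℝ)
    (hg : ∀ j : ℕ, |g j| ≤ 16 * ((j:ℝ) + 1 + k) ^ (1/2 : ℝ)) :
    Summable (fun j : ℕ => g j * (1 / (((j:ℝ)+1) * ((j:ℝ)+2)))) := by
  have hs := ((Real.summable_one_div_nat_add_rpow 1 (3/2)).2 (by norm_num)).mul_left
    (16 * ((k:ℝ)+1)^(1/2:ℝ))
  refine Summable.of_norm_bounded hs fun j => ?_
  have hj : (0:ℝ) ≤ j := Nat.cast_nonneg j
  have hk : (0:ℝ) ≤ k := Nat.cast_nonneg k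
  rw [norm_mul, Real.norm_eq_abs, Real.norm_of_nonneg (by positivity),
    abs_of_nonneg (by positivity : (0:ℝ) ≤ (j:ℝ) + 1)]
  have h1 : ((j:ℝ) + 1 + k) ^ (1/2 : ℝ) ≤ ((k:ℝ)+1)^(1/2:ℝ) * ((j:ℝ)+1)^(1/2:ℝ) := by
    rw [← Real.mul_rpow (by positivity) (by positivity)]
    apply Real.rpow_le_rpow (by positivity) (by nlinarith) (by norm_num)
  have h2 : 1 / (((j:ℝ)+1) * ((j:ℝ)+2)) ≤ 1 / (((j:ℝ)+1) * ((j:ℝ)+1)) := by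
    gcongr; norm_num
  have h3 : ((j:ℝ)+1)^(1/2:ℝ) * (1 / (((j:ℝ)+1) * ((j:ℝ)+1))) = 1 / ((j:ℝ)+1)^(3/2:ℝ) := by
    rw [mul_one_div, div_eq_div_iff (by positivity) (by positivity), ← Real.rpow_add (by positivity)]
    norm_num
    ring
  calc |g j| * (1 / (((j:ℝ)+1) * ((j:ℝ)+2)))
      ≤ (16 * (((k:ℝ)+1)^(1/2:ℝ) * ((j:ℝ)+1)^(1/2:ℝ))) * (1 / (((j:ℝ)+1) * ((j:ℝ)+1))) := by
        apply mul_le_mul ((hg j).trans _) h2 (by positivity) (by positivity)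
        gcongr
    _ = 16 * ((k:ℝ)+1)^(1/2:ℝ) * (((j:ℝ)+1)^(1/2:ℝ) * (1 / (((j:ℝ)+1) * ((j:ℝ)+1)))) := by ring
    _ = _ := by rw [h3]

lemma log_bd {t : ℝ} (ht : 1 ≤ t) : Real.log t ≤ 4 * t ^ (1/4 : ℝ) := by
  have := Real.log_le_rpow_div (by linarith : 0 ≤ t) (by norm_num : (0:ℝ) < 1/4)
  linarith

lemma one_le_jk (j k : ℕ) : (1:ℝ) ≤ (j:ℝ) + 1 + k := by
  have hj : (0:ℝ) ≤ j := Nat.cast_nonneg j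
  have hk : (0:ℝ) ≤ k := Nat.cast_nonneg k
  linarith

/-- values of the observable -/
noncomputable def gl (k j : ℕ) : ℝ := Real.log ((j:ℝ) + 1 + k)

lemma gl_nonneg (k j : ℕ) : 0 ≤ gl k j := Real.log_nonneg (one_le_jk j k)

lemma sum_gl (k : ℕ) : Summable (fun j : ℕ => gl k j * (1 / (((j:ℝ)+1) * ((j:ℝ)+2)))) := by
  refine sum_aux k (gl k) fun j => ?_
  have h1 := one_le_jk j k
  rw [abs_of_nonneg (gl_nonneg k j)]
  have h2 : ((j:ℝ) + 1 + k) ^ (1/4 : ℝ) ≤ ((j:ℝ) + 1 + k) ^ (1/2 : ℝ) :=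
    Real.rpow_le_rpow_of_exponent_le h1 (by norm_num)
  have h3 : 0 ≤ ((j:ℝ) + 1 + k) ^ (1/2 : ℝ) := by positivity
  have := log_bd h1
  unfold gl
  linarith

lemma sum_gl_sq (k : ℕ) : Summable (fun j : ℕ => (gl k j)^2 * (1 / (((j:ℝ)+1) * ((j:ℝ)+2)))) := by
  refine sum_aux k (fun j => (gl k j)^2) fun j => ?_
  have h1 := one_le_jk j k
  rw [abs_of_nonneg (sq_nonneg _)]
  have h2 : ((j:ℝ) + 1 + k) ^ (1/2 : ℝ) = (((j:ℝ) + 1 + k) ^ (1/4 : ℝ))^2 := by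
    rw [← Real.rpow_mul_natCast (by linarith)]; norm_num
  rw [h2, show (16:ℝ) = 4^2 by norm_num, ← mul_pow]
  exact pow_le_pow_left₀ (gl_nonneg k j) (log_bd h1) 2

lemma sum_glp (k : ℕ) : Summable (fun j : ℕ => gl k j * gp j) := by
  refine Summable.of_nonneg_of_le (fun j => mul_nonneg (gl_nonneg k j) (gp_nonneg j)) (fun j => ?_)
    ((sum_gl k).mul_left 2)
  calc _ ≤ gl k j * (2 / (((j:ℝ)+1) * ((j:ℝ)+2))) :=
        mul_le_mul_of_nonneg_left (gp_le j) (gl_nonneg k j)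
    _ = _ := by ring

lemma sum_glp_sq (k : ℕ) : Summable (fun j : ℕ => (gl k j)^2 * gp j) := by
  refine Summable.of_nonneg_of_le (fun j => mul_nonneg (sq_nonneg _) (gp_nonneg j)) (fun j => ?_)
    ((sum_gl_sq k).mul_left 2)
  calc _ ≤ (gl k j)^2 * (2 / (((j:ℝ)+1) * ((j:ℝ)+2))) :=
        mul_le_mul_of_nonneg_left (gp_le j) (sq_nonneg _)
    _ = _ := by ring

/-- the mean -/
noncomputable def gm (k : ℕ) : ℝ := ∑' j, gl k j * gp j

lemma gm_nonneg (k : ℕ) : 0 ≤ gm k := tsum_nonneg fun j => mul_nonneg (gl_nonneg k j) (gp_nonneg j)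

lemma log_Kconst (k : ℕ) : Real.log (Kconst k) = gm k := by
  have h := (sum_glp k).hasSum.rexp
  have e : Kconst k = Real.exp (gm k) := by
    unfold Kconst gm
    rw [← h.tprod_eq]
    congr 1
    ext j
    rw [Function.comp, Real.rpow_def_of_pos (by positivity)]
    congr 1
    unfold gl gp
    ring
  rw [e, Real.log_exp]

/-- the observable -/
noncomputable def gf (k : ℕ) (x : ℝ) : ℝ := Real.log ((⌊x⁻¹⌋₊ : ℝ) + k)

lemma gf_nonneg (k : ℕ) (x : ℝ) : 0 ≤ gf k x := by
  unfold gf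
  have : ((⌊x⁻¹⌋₊ : ℝ) + k) = ((⌊x⁻¹⌋₊ + k : ℕ) : ℝ) := by push_cast; ring
  rw [this]
  exact Real.log_natCast_nonneg _

lemma gf_meas (k : ℕ) : Measurable (gf k) :=
  (measurable_from_nat (f := fun n : ℕ => Real.log ((n:ℝ) + k))).comp
    (Nat.measurable_floor.comp measurable_inv)

lemma lint_gf (k : ℕ) : ∫⁻ x, ENNReal.ofReal (gf k x) ∂gmu = ENNReal.ofReal (gm k) := by
  have := lint_floor (fun n : ℕ => ENNReal.ofReal (Real.log ((n:ℝ) + k)))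
  unfold gf
  rw [this]
  unfold gm
  rw [ENNReal.ofReal_tsum_of_nonneg (fun j => mul_nonneg (gl_nonneg k j) (gp_nonneg j)) (sum_glp k)]
  refine tsum_congr fun j => ?_
  rw [ENNReal.ofReal_mul (gl_nonneg k j), gl]
  push_cast
  rfl

lemma lint_gf_sq (k : ℕ) :
    ∫⁻ x, ENNReal.ofReal ((gf k x)^2) ∂gmu = ENNReal.ofReal (∑' j, (gl k j)^2 * gp j) := by
  have := lint_floor (fun n : ℕ => ENNReal.ofReal ((Real.log ((n:ℝ) + k))^2))
  unfold gf
  rw [this]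
  rw [ENNReal.ofReal_tsum_of_nonneg (fun j => mul_nonneg (sq_nonneg _) (gp_nonneg j))
    (sum_glp_sq k)]
  refine tsum_congr fun j => ?_
  rw [ENNReal.ofReal_mul (sq_nonneg _), gl]
  push_cast
  rfl

lemma ae_gmu_mem' : ∀ᵐ x ∂gmu, x ∈ Set.Ico (0:ℝ) 1 := by
  have h : ∀ᵐ x ∂(volume.restrict (Set.Ioc (0:ℝ) 1)), x ∈ Set.Ico (0:ℝ) 1 := by
    rw [← restrict_Ico_eq_restrict_Ioc]
    exact ae_restrict_mem measurableSet_Ico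
  exact (withDensity_absolutelyContinuous _ gdens).ae_le h

/-- Correlation bound. -/
lemma cov_bound (k : ℕ) : ∃ C : ℝ, 0 ≤ C ∧ ∀ d : ℕ,
    ∫⁻ x, ENNReal.ofReal (gf k x) * ENNReal.ofReal (gf k (gT^[d] x)) ∂gmu
      ≤ ENNReal.ofReal ((gm k)^2 + C * (9/10)^d) := by
  set E2 := ∑' j, (gl k j)^2 * gp j with hE2
  set Lc := ∑' j : ℕ, 4 * (gl k j * (1 / (((j:ℝ)+1) * ((j:ℝ)+2)))) with hLc
  have hsL := (sum_gl k).mul_left 4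
  have hE2n : 0 ≤ E2 := tsum_nonneg fun j => mul_nonneg (sq_nonneg _) (gp_nonneg j)
  have hLn : 0 ≤ Lc := tsum_nonneg fun j => by have := gl_nonneg k j; positivity
  have hm := gm_nonneg k
  have hFm : Measurable (fun x => ENNReal.ofReal (gf k x)) := (gf_meas k).ennreal_ofReal
  refine ⟨E2 + 10/9 * (Lc * gm k), by positivity, fun d => ?_⟩
  cases d with
  | zero =>
    simp only [Function.iterate_zero, id, pow_zero, mul_one]
    simp_rw [← ENNReal.ofReal_mul (gf_nonneg k _), ← sq]
    rw [lint_gf_sq]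
    apply ENNReal.ofReal_le_ofReal
    have : 0 ≤ 10/9 * (Lc * gm k) := by positivity
    nlinarith [sq_nonneg (gm k)]
  | succ e =>
    simp_rw [Function.iterate_succ_apply]
    rw [duality hFm (G := fun x => ENNReal.ofReal (gf k (gT^[e] x))) (hFm.comp (gT_iter_meas e))]
    set H : ℝ → ENNReal := fun y => ∑' j, ENNReal.ofReal (gw j y) * ENNReal.ofReal (gl k j) with hH
    have hHP : ∀ᵐ y ∂gmu, gP (fun x => ENNReal.ofReal (gf k x)) y = H y := by
      filter_upwards [ae_gmu_mem'] with y hy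
      unfold gP
      simp only [hH]
      refine tsum_congr fun j => ?_
      have : gu j y ∈ gI j := by rw [← gu_image]; exact ⟨y, hy, rfl⟩
      rw [gf, ((mem_gI j _).1 this).2, gl]
      push_cast
      rfl
    have hHm : Measurable H := by
      apply Measurable.tsum
      intro j
      exact (gw_meas j).ennreal_ofReal.mul_const _
    have hHint : ∫⁻ y, H y ∂gmu = ENNReal.ofReal (gm k) := by
      rw [← lint_gf, ← gP_int hFm]
      exact (lintegral_congr_ae hHP).symm
    have hne : ∀ y ∈ Set.Icc (0:ℝ) 1, ∀ j, 0 ≤ gw j y * gl k j := fun y hy j =>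
      mul_nonneg (gw_nonneg j hy) (gl_nonneg k j)
    have hsum : ∀ y ∈ Set.Icc (0:ℝ) 1, Summable (fun j => gw j y * gl k j) := by
      intro y hy
      have hy0 := hy.1
      have hy1 := hy.2
      refine Summable.of_nonneg_of_le (hne y hy) (fun j => ?_) ((sum_gl k).mul_left 2)
      have : gw j y ≤ 2 / (((j:ℝ)+1) * ((j:ℝ)+2)) := by
        unfold gw
        apply div_le_div₀ (by norm_num) (by linarith) (by positivity)
        exact mul_le_mul (by linarith) (by linarith) (by positivity) (by positivity)
      calc _ ≤ 2 / (((j:ℝ)+1) * ((j:ℝ)+2)) * gl k j :=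
            mul_le_mul_of_nonneg_right this (gl_nonneg k j)
        _ = _ := by ring
    have hdec := decay hFm e H (fun y => ∑' j, gw j y * gl k j) Lc hHm
      (fun y hy => tsum_nonneg (hne y hy)) (fun y hy => by
        simp only [hH]
        rw [ENNReal.ofReal_tsum_of_nonneg (hne y hy) (hsum y hy)]
        refine tsum_congr fun j => ?_
        rw [ENNReal.ofReal_mul (gw_nonneg j hy)]) (fun x hx y hy => by
        rw [← (hsum x hx).tsum_sub (hsum y hy), ← Real.norm_eq_abs]
        refine tsum_of_norm_bounded (hsL.hasSum.mul_right |x - y|) fun j => ?_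
        rw [← sub_mul, norm_mul, Real.norm_eq_abs, Real.norm_of_nonneg (gl_nonneg k j)]
        refine (mul_le_mul_of_nonneg_right (gw_lip j hx hy) (gl_nonneg k j)).trans (le_of_eq ?_)
        ring)
    rw [hHint, lint_gf] at hdec
    calc _ = ∫⁻ x, H x * ENNReal.ofReal (gf k (gT^[e] x)) ∂gmu := by
          apply lintegral_congr_ae
          filter_upwards [hHP] with y hy
          rw [hy]
      _ ≤ _ := hdec
      _ ≤ _ := by
        rw [← ENNReal.ofReal_add hm (by positivity), ← ENNReal.ofReal_mul (by positivity)]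
        apply ENNReal.ofReal_le_ofReal
        rw [pow_succ (9/10 : ℝ) e]
        have : 0 ≤ E2 * ((9/10:ℝ)^e * (9/10)) := by positivity
        linarith [this, (by ring : (gm k + Lc * (9/10)^e) * gm k + E2 * ((9/10:ℝ)^e * (9/10))
          = (gm k)^2 + (E2 + 10/9 * (Lc * gm k)) * ((9/10)^e * (9/10)))]

lemma gf_iter_memLp (k n : ℕ) : MemLp (fun x => gf k (gT^[n] x)) 2 gmu := by
  have hme : Measurable (fun x => gf k (gT^[n] x)) := (gf_meas k).comp (gT_iter_meas n)
  rw [memLp_two_iff_integrable_sq hme.aestronglyMeasurable]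
  refine ⟨(hme.pow_const 2).aestronglyMeasurable, ?_⟩
  rw [hasFiniteIntegral_iff_ofReal (ae_of_all _ fun x => sq_nonneg _)]
  rw [gT_iter_inv (G := fun x => ENNReal.ofReal ((gf k x)^2))
    ((gf_meas k).pow_const 2).ennreal_ofReal n, lint_gf_sq]
  exact ENNReal.ofReal_lt_top

lemma slln_gauss (k : ℕ) (φ : ℕ → ℕ) (hφ : ∀ i j, i ≤ j → φ i + (j - i) ≤ φ j) :
    ∀ᵐ x ∂gmu, Tendsto (fun n : ℕ => (1/(n:ℝ)) * ∑ j ∈ Finset.range n, gf k (gT^[φ j] x))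
      atTop (nhds (gm k)) := by
  obtain ⟨C, hC, hcov⟩ := cov_bound k
  have hme : ∀ n, Measurable (fun x => gf k (gT^[n] x)) := fun n => (gf_meas k).comp (gT_iter_meas n)
  refine slln_aux gmu (fun j x => gf k (gT^[φ j] x)) (gm k) C hC (fun i x => gf_nonneg k _)
    (fun i => gf_iter_memLp k _) (fun i => ?_) (fun i j hij => ?_)
  · rw [integral_eq_lintegral_of_nonneg_ae (ae_of_all _ fun x => gf_nonneg k _)
      (hme _).aestronglyMeasurable,
      gT_iter_inv (G := fun x => ENNReal.ofReal (gf k x)) (gf_meas k).ennreal_ofReal, lint_gf,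
      ENNReal.toReal_ofReal (gm_nonneg k)]
  · have h := hφ i j hij
    obtain ⟨d, hd⟩ : ∃ d, φ j = d + φ i := ⟨φ j - φ i, by omega⟩
    rw [integral_eq_lintegral_of_nonneg_ae
      (ae_of_all _ fun x => mul_nonneg (gf_nonneg k _) (gf_nonneg k _))
      ((hme _).mul (hme _)).aestronglyMeasurable]
    apply ENNReal.toReal_le_of_le_ofReal (by positivity)
    rw [hd]
    simp_rw [ENNReal.ofReal_mul (gf_nonneg k _), Function.iterate_add_apply]
    rw [gT_iter_inv (G := fun x => ENNReal.ofReal (gf k x) * ENNReal.ofReal (gf k (gT^[d] x)))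
      ((gf_meas k).ennreal_ofReal.mul (hme d).ennreal_ofReal)]
    refine (hcov d).trans (ENNReal.ofReal_le_ofReal ?_)
    have : ((9:ℝ)/10)^d ≤ (9/10)^(j - i) :=
      pow_le_pow_of_le_one (by norm_num) (by norm_num) (by omega)
    nlinarith

lemma ae_transfer {p : ℝ → Prop} (h : ∀ᵐ x ∂gmu, p x) : ∀ᵐ x : ℝ, x ∈ Set.Ioc (0:ℝ) 1 → p x := by
  rw [← ae_restrict_iff' measurableSet_Ioc]
  have hac : volume.restrict (Set.Ioc (0:ℝ) 1) ≪ gmu := by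
    unfold gmu
    apply withDensity_absolutelyContinuous' gdens_meas.aemeasurable
    filter_upwards [ae_restrict_mem measurableSet_Ioc] with x hx
    have := hx.1
    have hlog : 0 < Real.log 2 := Real.log_pos one_lt_two
    unfold gdens
    have : 0 < ((1 + x) * Real.log 2)⁻¹ := by positivity
    simpa using this
  exact hac.ae_le h

/-- Ergodic-type theorem: for every integer `k ≥ 0` and Lebesgue-almost every
`x ∈ (0,1)`, `x` is irrational with partial quotients `a` (0-indexed:
`a j = a_{j+1}(x)`, so `a_{2j} = a (2j-1)` and `a_{2j-1} = a (2j-2)`), and the averages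
`(1/n) ∑_{j=1}^n log(a_j+k)`, `(1/n) ∑_{j=1}^n log(a_{2j}+k)` and
`(1/n) ∑_{j=1}^n log(a_{2j-1}+k)` all converge to `log K_k`. -/
theorem avg_log_coeff_tendsto (k : ℕ) :
    ∀ᵐ x : ℝ, x ∈ Set.Ioo (0:ℝ) 1 →
      Irrational x ∧
      ∃ a : ℕ → ℕ+, cfVal a = x ∧
        Tendsto (fun n : ℕ => (1 / (n:ℝ)) * ∑ j ∈ Finset.range n,
            Real.log ((a j : ℝ) + (k:ℝ))) atTop (nhds (Real.log (Kconst k))) ∧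
        Tendsto (fun n : ℕ => (1 / (n:ℝ)) * ∑ j ∈ Finset.range n,
            Real.log ((a (2*j+1) : ℝ) + (k:ℝ))) atTop (nhds (Real.log (Kconst k))) ∧
        Tendsto (fun n : ℕ => (1 / (n:ℝ)) * ∑ j ∈ Finset.range n,
            Real.log ((a (2*j) : ℝ) + (k:ℝ))) atTop (nhds (Real.log (Kconst k))) := by
  have hirr : ∀ᵐ x : ℝ, x ∉ Set.range ((↑) : ℚ → ℝ) :=
    (Set.countable_range _).ae_notMem _
  filter_upwards [hirr, ae_transfer (slln_gauss k (fun j => j) (fun i j h => by omega)),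
    ae_transfer (slln_gauss k (fun j => 2*j+1) (fun i j h => by omega)),
    ae_transfer (slln_gauss k (fun j => 2*j) (fun i j h => by omega))] with x hx h1 h2 h3 hmem
  have hmem' : x ∈ Set.Ioc (0:ℝ) 1 := ⟨hmem.1, hmem.2.le⟩
  have hx' : Irrational x := hx
  have e : ∀ n, Real.log ((cfA x n : ℝ) + (k:ℝ)) = gf k (gT^[n] x) := by
    intro n
    unfold gf
    rw [← cfA_coe hx' hmem n]
  refine ⟨hx', cfA x, cfVal_cfA hx' hmem, ?_⟩
  rw [log_Kconst]
  simp_rw [e]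
  exact ⟨h1 hmem', h2 hmem', h3 hmem'⟩
end

section
/- Let a ∈ ℕ^ℕ be the sequence defined by a_j = 2^j if j is even and a_j = 1 if j is odd, and let x = [a_1,a_2,…] be the irrational number of (0,1) with this continued fraction expansion. Then the Hölder exponent of f_1 at x equals 0: h_{f_1}(x) = 0. In particular, f_1 is a multifractal function. -/
open Filter Finset MeasureTheory

/-- The set `I` of irrational numbers of `[0,1]`. -/
def Iirr : Set ℝ := {x | x ∈ Set.Icc (0:ℝ) 1 ∧ Irrational x}

/-- The (unique) sequence of partial quotients of `x`, when `x` has a continued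
fraction expansion. -/
noncomputable def coeff (x : ℝ) : ℕ → ℕ+ := by
  classical
  exact if h : ∃ a : ℕ → ℕ+, cfVal a = x then h.choose else fun _ => 1

/-- First component of Cantor's bijection: `f₁([a_1,a_2,…]) = [a_1,a_3,a_5,…]`. -/
noncomputable def cantorF1 (x : ℝ) : ℝ := cfVal (fun j => coeff x (2*j))

/-- Second component of Cantor's bijection: `f₂([a_1,a_2,…]) = [a_2,a_4,a_6,…]`. -/
noncomputable def cantorF2 (x : ℝ) : ℝ := cfVal (fun j => coeff x (2*j+1))

/-- `g ∈ Λ^α(x)`, where `g` is viewed as a function on the set `A`. -/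
def memHolder (g : ℝ → ℝ) (A : Set ℝ) (x : ℝ) (α : ℝ) : Prop :=
  ∃ C > 0, ∀ y ∈ A, |g x - g y| ≤ C * |x - y| ^ α

/-- The pointwise Hölder exponent `h_g(x)` of `g : A → ℝ` at `x`. -/
noncomputable def holderExp (g : ℝ → ℝ) (A : Set ℝ) (x : ℝ) : ℝ :=
  sSup {α : ℝ | α ∈ Set.Icc (0:ℝ) 1 ∧ memHolder g A x α}


namespace CantorAux

/-- shift of a sequence -/
def sh (a : ℕ → ℕ+) : ℕ → ℕ+ := fun n => a (n+1)

lemma qp (a : ℕ → ℕ+) (n : ℕ) :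
    qden a (n+1) = (a 0 : ℕ) * qden (sh a) n + pnum (sh a) n ∧ pnum a (n+1) = qden (sh a) n := by
  induction n using Nat.twoStepInduction with
  | zero => simp [qden, pnum]
  | one => simp [qden, pnum, sh, mul_comm]
  | more n h1 h2 =>
    have e1 : qden a (n+2+1) = (a (n+2) : ℕ) * qden a (n+1+1) + qden a (n+1) := rfl
    have e2 : pnum a (n+2+1) = (a (n+2) : ℕ) * pnum a (n+1+1) + pnum a (n+1) := rfl
    have e3 : qden (sh a) (n+2) = (a (n+2) : ℕ) * qden (sh a) (n+1) + qden (sh a) n := rfl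
    have e4 : pnum (sh a) (n+2) = (a (n+2) : ℕ) * pnum (sh a) (n+1) + pnum (sh a) n := rfl
    rw [e1, e2, e3, e4, h1.1, h1.2, h2.1, h2.2]
    constructor
    · ring
    · trivial

lemma qpos (a : ℕ → ℕ+) (n : ℕ) : 0 < qden a n := by
  induction n using Nat.twoStepInduction with
  | zero => simp [qden]
  | one => simp [qden]
  | more n h1 h2 =>
    have e1 : qden a (n+2) = (a (n+1) : ℕ) * qden a (n+1) + qden a n := rfl
    omega

/-- convergents -/
noncomputable def cv (a : ℕ → ℕ+) (n : ℕ) : ℝ := (pnum a n : ℝ) / (qden a n : ℝ)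

lemma cv_zero (a : ℕ → ℕ+) : cv a 0 = 0 := by simp [cv, pnum]

lemma cv_nonneg (a : ℕ → ℕ+) (n : ℕ) : 0 ≤ cv a n := by unfold cv; positivity

lemma cv_succ (a : ℕ → ℕ+) (n : ℕ) : cv a (n+1) = 1 / ((a 0 : ℕ) + cv (sh a) n) := by
  unfold cv
  rw [(qp a n).1, (qp a n).2]
  have h : (0:ℝ) < qden (sh a) n := by exact_mod_cast qpos _ _
  have h3 : (0:ℝ) < (a 0 : ℕ) := by exact_mod_cast (a 0).pos
  have h2 : (0:ℝ) ≤ pnum (sh a) n := by positivity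
  push_cast
  field_simp

lemma one_le (k : ℕ+) : (1:ℝ) ≤ ((k : ℕ) : ℝ) := by exact_mod_cast k.pos

lemma cv_le_one (a : ℕ → ℕ+) (n : ℕ) : cv a n ≤ 1 := by
  cases n with
  | zero => rw [cv_zero]; norm_num
  | succ n =>
    rw [cv_succ]
    have := one_le (a 0)
    have := cv_nonneg (sh a) n
    rw [div_le_one (by linarith)]
    linarith

lemma step1 (p x y : ℝ) (hp : 1 ≤ p) (hx : 0 ≤ x) (hy : 0 ≤ y) :
    |1/(p+x) - 1/(p+y)| = |x - y| * (1/(p+x)) * (1/(p+y)) := by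
  have h1 : 0 < p + x := by linarith
  have h2 : 0 < p + y := by linarith
  have : 1/(p+x) - 1/(p+y) = (y - x) * (1/(p+x)) * (1/(p+y)) := by
    field_simp
    ring
  rw [this, abs_mul, abs_mul, abs_of_pos (a := 1/(p+x)) (by positivity),
    abs_of_pos (a := 1/(p+y)) (by positivity), abs_sub_comm]

lemma step1_le (p x y : ℝ) (hp : 1 ≤ p) (hx : 0 ≤ x) (hy : 0 ≤ y) :
    |1/(p+x) - 1/(p+y)| ≤ |x - y| * (1/p^2) := by
  rw [step1 p x y hp hx hy, mul_assoc]
  apply mul_le_mul_of_nonneg_left _ (abs_nonneg _)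
  have e : 1/p^2 = (1/p) * (1/p) := by field_simp
  rw [e]
  have h1 : 1/(p+x) ≤ 1/p := by apply one_div_le_one_div_of_le <;> linarith
  have h2 : 1/(p+y) ≤ 1/p := by apply one_div_le_one_div_of_le <;> linarith
  have : 0 ≤ 1/(p+y) := by have : 0 ≤ p + y := by linarith
                           positivity
  have : 0 ≤ 1/p := by have : 0 ≤ p := by linarith
                       positivity
  apply mul_le_mul <;> assumption

lemma step2_le (p q x y : ℝ) (hp : 1 ≤ p) (hq : 1 ≤ q) (hx : 0 ≤ x) (hy : 0 ≤ y) :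
    |1/(p+1/(q+x)) - 1/(p+1/(q+y))| ≤ |x - y| * (1/4) := by
  have h1 : 0 < q + x := by linarith
  have h2 : 0 < q + y := by linarith
  rw [step1 p _ _ hp (by positivity) (by positivity), step1 q x y hq hx hy]
  have key : ∀ z, 0 ≤ z → 0 ≤ (1/(q+z)) * (1/(p+1/(q+z))) ∧
      (1/(q+z)) * (1/(p+1/(q+z))) ≤ 1/2 := by
    intro z hz
    have h3 : 0 < q + z := by linarith
    have h4 : (1/(q+z)) * (1/(p+1/(q+z))) = 1/(p*(q+z)+1) := by
      field_simp
    rw [h4]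
    have : 1 ≤ p * (q+z) := by nlinarith
    constructor
    · positivity
    · apply one_div_le_one_div_of_le <;> linarith
  obtain ⟨k1, k2⟩ := key x hx
  obtain ⟨k3, k4⟩ := key y hy
  calc _ = |x-y| * (((1/(q+x)) * (1/(p+1/(q+x)))) * ((1/(q+y)) * (1/(p+1/(q+y))))) := by ring
    _ ≤ |x-y| * ((1/2) * (1/2)) := by
        apply mul_le_mul_of_nonneg_left _ (abs_nonneg _)
        apply mul_le_mul <;> first | assumption | norm_num
    _ = _ := by ring

lemma abs_le_one {x y : ℝ} (hx : 0 ≤ x) (hx' : x ≤ 1) (hy : 0 ≤ y) (hy' : y ≤ 1) :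
    |x - y| ≤ 1 := by
  rw [abs_le]; constructor <;> linarith

lemma cv_cauchy (n : ℕ) : ∀ (a : ℕ → ℕ+) (m : ℕ), n ≤ m → |cv a n - cv a m| ≤ 2 * (1/2)^n := by
  induction n using Nat.twoStepInduction with
  | zero =>
    intro a m _
    have := abs_le_one (cv_nonneg a 0) (cv_le_one a 0) (cv_nonneg a m) (cv_le_one a m)
    simp; linarith
  | one =>
    intro a m _
    have := abs_le_one (cv_nonneg a 1) (cv_le_one a 1) (cv_nonneg a m) (cv_le_one a m)
    norm_num; linarith
  | more n h1 h2 =>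
    intro a m hm
    obtain ⟨k, rfl⟩ : ∃ k, m = k + 2 := ⟨m - 2, by omega⟩
    have := h1 (sh (sh a)) k (by omega)
    rw [cv_succ, cv_succ, cv_succ, cv_succ]
    have h3 := step2_le (a 0 : ℕ) (sh a 0 : ℕ) (cv (sh (sh a)) n) (cv (sh (sh a)) k)
      (one_le _) (one_le _) (cv_nonneg _ _) (cv_nonneg _ _)
    rw [pow_add]
    linarith

lemma cv_tendsto (a : ℕ → ℕ+) : Tendsto (cv a) atTop (nhds (cfVal a)) := by
  have hc : CauchySeq (cv a) := by
    apply cauchySeq_of_le_tendsto_0 (fun n => 2 * (2 * (1/2 : ℝ)^n))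
    · intro n m N hn hm
      rw [Real.dist_eq]
      have h1 := cv_cauchy N a n hn
      have h2 := cv_cauchy N a m hm
      have := abs_sub_le (cv a n) (cv a N) (cv a m)
      rw [abs_sub_comm (cv a n) (cv a N)] at this
      linarith
    · have := tendsto_pow_atTop_nhds_zero_of_lt_one (r := (1/2 : ℝ)) (by norm_num) (by norm_num)
      simpa using (this.const_mul 2).const_mul 2
  exact hc.tendsto_limUnder

lemma cf_nonneg (a : ℕ → ℕ+) : 0 ≤ cfVal a :=
  ge_of_tendsto' (cv_tendsto a) (cv_nonneg a)

lemma cf_rec (a : ℕ → ℕ+) : cfVal a = 1 / ((a 0 : ℕ) + cfVal (sh a)) := by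
  have h1 := (tendsto_add_atTop_iff_nat 1).2 (cv_tendsto a)
  have h2 : Tendsto (fun n => cv a (n+1)) atTop (nhds (1 / ((a 0 : ℕ) + cfVal (sh a)))) := by
    simp_rw [cv_succ]
    apply Tendsto.div tendsto_const_nhds (tendsto_const_nhds.add (cv_tendsto _))
    have := one_le (a 0)
    have := cf_nonneg (sh a)
    positivity
  exact tendsto_nhds_unique h1 h2

lemma cf_pos (a : ℕ → ℕ+) : 0 < cfVal a := by
  rw [cf_rec]
  have := one_le (a 0)
  have := cf_nonneg (sh a)
  positivity

lemma cf_lt_one (a : ℕ → ℕ+) : cfVal a < 1 := by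
  rw [cf_rec]
  have := one_le (a 0)
  have := cf_pos (sh a)
  rw [div_lt_one (by linarith)]
  linarith

lemma cf_inv (a : ℕ → ℕ+) : 1 / cfVal a = (a 0 : ℕ) + cfVal (sh a) := by
  conv_lhs => rw [cf_rec]
  simp

lemma cf_head {a b : ℕ → ℕ+} (h : cfVal a = cfVal b) :
    a 0 = b 0 ∧ cfVal (sh a) = cfVal (sh b) := by
  have h1 := cf_inv a
  have h2 := cf_inv b
  rw [h] at h1
  have e : ((a 0 : ℕ):ℝ) + cfVal (sh a) = (b 0 : ℕ) + cfVal (sh b) := by rw [← h1, ← h2]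
  have p1 := cf_pos (sh a)
  have p2 := cf_pos (sh b)
  have p3 := cf_lt_one (sh a)
  have p4 := cf_lt_one (sh b)
  have e2 : (a 0 : ℕ) = (b 0 : ℕ) := by
    have q1 : ((a 0 : ℕ):ℝ) < ((b 0 : ℕ) + 1 : ℕ) := by push_cast; linarith
    have q2 : ((b 0 : ℕ):ℝ) < ((a 0 : ℕ) + 1 : ℕ) := by push_cast; linarith
    have q3 := Nat.cast_lt.1 q1
    have q4 := Nat.cast_lt.1 q2
    omega
  refine ⟨PNat.coe_injective e2, ?_⟩
  rw [e2] at e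
  linarith

lemma cf_inj_aux (n : ℕ) : ∀ a b : ℕ → ℕ+, cfVal a = cfVal b → a n = b n := by
  induction n with
  | zero => intro a b h; exact (cf_head h).1
  | succ n ih => intro a b h; exact ih (sh a) (sh b) (cf_head h).2

lemma coeff_cf (a : ℕ → ℕ+) : coeff (cfVal a) = a := by
  have h : ∃ b : ℕ → ℕ+, cfVal b = cfVal a := ⟨a, rfl⟩
  unfold coeff
  rw [dif_pos h]
  funext n
  exact cf_inj_aux n _ _ h.choose_spec

lemma cf_not_rat (N : ℕ) : ∀ (a : ℕ → ℕ+) (p q : ℤ), 0 < q → q ≤ N → cfVal a * q = p → False := by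
  induction N with
  | zero => intro a p q h1 h2; simp at h2; omega
  | succ N ih =>
    intro a p q h1 h2 h3
    have c1 := cf_pos a
    have c2 := cf_lt_one a
    have hq : (0:ℝ) < q := by exact_mod_cast h1
    have hp : 0 < p := by
      have : (0:ℝ) < p := by rw [← h3]; positivity
      exact_mod_cast this
    have hpq : p < q := by
      have : (p:ℝ) < q := by rw [← h3]; nlinarith
      exact_mod_cast this
    apply ih (sh a) (q - ((a 0 : ℕ) : ℤ) * p) p hp (by push_cast at h2; omega)
    have h4 := cf_inv a
    have h5 : cfVal (sh a) = 1 / cfVal a - (a 0 : ℕ) := by linarith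
    rw [h5]
    push_cast
    rw [← h3]
    field_simp

lemma cf_mem (a : ℕ → ℕ+) : cfVal a ∈ Iirr := by
  refine ⟨⟨(cf_pos a).le, (cf_lt_one a).le⟩, ?_⟩
  rintro ⟨r, hr⟩
  apply cf_not_rat r.den a r.num r.den (by exact_mod_cast r.den_pos) le_rfl
  rw [← hr]
  exact_mod_cast Rat.mul_den_eq_num r

lemma F1_cf (a : ℕ → ℕ+) : cantorF1 (cfVal a) = cfVal (fun j => a (2*j)) := by
  unfold cantorF1; rw [coeff_cf]

lemma agree_prod (n : ℕ) : ∀ a b : ℕ → ℕ+, (∀ i < n, a i = b i) →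
    |cfVal a - cfVal b| ≤ ∏ i ∈ Finset.range n, (1 / ((a i : ℕ) : ℝ)^2) := by
  induction n with
  | zero =>
    intro a b _
    simpa using abs_le_one (cf_pos a).le (cf_lt_one a).le (cf_pos b).le (cf_lt_one b).le
  | succ n ih =>
    intro a b h
    have h1 := ih (sh a) (sh b) (fun i hi => h (i+1) (by omega))
    rw [cf_rec a, cf_rec b, ← h 0 (by omega), Finset.prod_range_succ']
    refine (step1_le _ _ _ (one_le _) (cf_nonneg _) (cf_nonneg _)).trans ?_
    exact mul_le_mul_of_nonneg_right h1 (by positivity)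

lemma agree_half (n : ℕ) : ∀ a b : ℕ → ℕ+, (∀ i < n, a i = b i) →
    |cfVal a - cfVal b| ≤ 2 * (1/2)^n := by
  induction n using Nat.twoStepInduction with
  | zero =>
    intro a b _
    have := abs_le_one (cf_pos a).le (cf_lt_one a).le (cf_pos b).le (cf_lt_one b).le
    simp; linarith
  | one =>
    intro a b _
    have := abs_le_one (cf_pos a).le (cf_lt_one a).le (cf_pos b).le (cf_lt_one b).le
    norm_num; linarith
  | more n h1 h2 =>
    intro a b h
    have h3 := h1 (sh (sh a)) (sh (sh b)) (fun i hi => h (i+2) (by omega))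
    have e1 : sh a 0 = sh b 0 := h 1 (by omega)
    rw [cf_rec a, cf_rec b, cf_rec (sh a), cf_rec (sh b), ← h 0 (by omega), ← e1]
    have h4 := step2_le (a 0 : ℕ) (sh a 0 : ℕ) (cfVal (sh (sh a))) (cfVal (sh (sh b)))
      (one_le _) (one_le _) (cf_nonneg _) (cf_nonneg _)
    rw [pow_add]
    linarith

/-- the constant sequence one -/
def on : ℕ → ℕ+ := fun _ => 1

lemma gold_rec : cfVal on = 1 / (1 + cfVal on) := by
  have := cf_rec on
  have e : sh on = on := rfl
  rw [e] at this
  simpa [on] using this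

lemma gold_ge : 3/5 ≤ cfVal on := by
  have h := gold_rec
  have h1 := cf_pos on
  have h2 := cf_lt_one on
  rw [eq_div_iff (by linarith)] at h
  nlinarith

lemma lower (n : ℕ) : ∀ b : ℕ → ℕ+, (∀ i < n, b i = 1) → b n ≠ 1 →
    (1/10) * (1/4)^n ≤ |cfVal on - cfVal b| := by
  induction n with
  | zero =>
    intro b _ h
    have h2 : 2 ≤ (b 0 : ℕ) := by
      have := (b 0).pos
      have : (b 0 : ℕ) ≠ 1 := fun e => h (PNat.coe_injective e)
      omega
    have h2' : (2:ℝ) ≤ ((b 0 : ℕ):ℝ) := by exact_mod_cast h2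
    have h3 : cfVal b ≤ 1/2 := by
      rw [cf_rec]
      have := cf_pos (sh b)
      apply one_div_le_one_div_of_le <;> linarith
    have := gold_ge
    have := le_abs_self (cfVal on - cfVal b)
    norm_num; linarith
  | succ n ih =>
    intro b h h'
    have h1 := ih (sh b) (fun i hi => h (i+1) (by omega)) h'
    have e : ((b 0 : ℕ) : ℝ) = 1 := by rw [h 0 (by omega)]; simp
    rw [gold_rec, cf_rec b, e, step1 1 _ _ le_rfl (cf_nonneg _) (cf_nonneg _)]
    have k : ∀ z : ℝ, 0 ≤ z → z ≤ 1 → 1/2 ≤ 1/(1+z) := by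
      intro z h1 h2
      apply one_div_le_one_div_of_le <;> linarith
    have k1 := k _ (cf_nonneg on) (cf_lt_one on).le
    have k2 := k _ (cf_nonneg (sh b)) (cf_lt_one (sh b)).le
    calc (1/10 : ℝ) * (1/4)^(n+1) = (1/10) * (1/4)^n * (1/2) * (1/2) := by ring
      _ ≤ _ := by gcongr

lemma prod_bound (a : ℕ → ℕ+)
    (ha : ∀ j : ℕ, Odd j → (a j : ℕ) = 2 ^ (j+1)) (ha' : ∀ j : ℕ, Even j → a j = 1) (n : ℕ) :
    ∏ i ∈ Finset.range (2*n), (1 / ((a i : ℕ) : ℝ)^2) ≤ (1/2)^(n*n) := by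
  induction n with
  | zero => simp
  | succ n ih =>
    have e : 2 * (n+1) = 2*n+1+1 := by ring
    rw [e, Finset.prod_range_succ, Finset.prod_range_succ, ha' (2*n) (by simp),
      ha (2*n+1) (by simp)]
    have h : (1/2:ℝ)^((n+1)*(n+1)) = (1/2)^(n*n) * (1/2)^(2*n+1) := by
      rw [← pow_add]; congr 1; ring
    rw [h]
    have h2 : (1:ℝ) / (((2 ^ (2*n+1+1) : ℕ) : ℝ))^2 ≤ (1/2)^(2*n+1) := by
      push_cast
      rw [one_div_pow, ← pow_mul]
      apply one_div_le_one_div_of_le (by positivity)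
      apply pow_le_pow_right₀ (by norm_num)
      omega
    have h3 : (0:ℝ) ≤ ∏ i ∈ Finset.range (2*n), (1 / ((a i : ℕ) : ℝ)^2) :=
      Finset.prod_nonneg (fun i _ => by positivity)
    simp only [PNat.one_coe, Nat.cast_one, one_pow, div_one, mul_one]
    apply mul_le_mul ih h2 (by positivity) (by positivity)

lemma mem_zero (x : ℝ) : memHolder cantorF1 Iirr x 0 := by
  refine ⟨1, one_pos, fun y _ => ?_⟩
  simp only [Real.rpow_zero, mul_one]
  exact abs_le_one (cf_pos _).le (cf_lt_one _).le (cf_pos _).le (cf_lt_one _).le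

lemma not_mem (a : ℕ → ℕ+)
    (ha : ∀ j : ℕ, Odd j → (a j : ℕ) = 2 ^ (j+1)) (ha' : ∀ j : ℕ, Even j → a j = 1)
    (α : ℝ) (hα : 0 < α) : ¬ memHolder cantorF1 Iirr (cfVal a) α := by
  rintro ⟨C, hC, h⟩
  have key : ∀ n : ℕ, (1/10 : ℝ) * (1/4)^n ≤ C * (((1/2:ℝ)^α)^n)^n := by
    intro n
    let b : ℕ → ℕ+ := fun i => if i = 2*n then 2 else a i
    have h1 := h (cfVal b) (cf_mem b)
    rw [F1_cf, F1_cf] at h1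
    have e1 : (fun j => a (2*j)) = on := by
      funext j; exact ha' _ (by simp)
    have h2 := lower n (fun j => b (2*j))
      (fun i hi => by
        have : 2*i ≠ 2*n := by omega
        simp only [b, if_neg this]; exact ha' _ (by simp))
      (by simp only [b, if_true]; decide)
    have h3 := (agree_prod (2*n) a b (fun i hi => by
      have : i ≠ 2*n := by omega
      simp only [b, if_neg this])).trans (prod_bound a ha ha' n)
    rw [e1] at h1
    refine h2.trans (h1.trans ?_)
    have h4 := Real.rpow_le_rpow (abs_nonneg _) h3 hα.le
    have e2 : ((1/2:ℝ)^(n*n))^α = (((1/2:ℝ)^α)^n)^n := by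
      rw [← pow_mul, ← Real.rpow_natCast, ← Real.rpow_natCast, ← Real.rpow_mul (by norm_num),
        ← Real.rpow_mul (by norm_num), mul_comm]
    rw [← e2]
    exact mul_le_mul_of_nonneg_left h4 hC.le
  have hr : (1/2:ℝ)^α < 1 := Real.rpow_lt_one (by norm_num) (by norm_num) hα
  have hr0 : 0 ≤ (1/2:ℝ)^α := by positivity
  have t1 := (tendsto_pow_atTop_nhds_zero_of_lt_one hr0 hr).eventually_lt_const
    (show (0:ℝ) < 1/8 by norm_num)
  have t2 := (tendsto_pow_atTop_atTop_of_one_lt (show (1:ℝ) < 2 by norm_num)).eventually_gt_atTop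
    (10 * C)
  obtain ⟨n, h1, h2⟩ := (t1.and t2).exists
  have h3 := key n
  have h4 : (((1/2:ℝ)^α)^n)^n ≤ (1/8)^n := pow_le_pow_left₀ (by positivity) h1.le n
  have h5 : (1/10 : ℝ) * (1/4)^n ≤ C * (1/8)^n :=
    h3.trans (mul_le_mul_of_nonneg_left h4 hC.le)
  have e : (1/4:ℝ)^n = 2^n * (1/8)^n := by rw [← mul_pow]; norm_num
  have h6 : (0:ℝ) < (1/8)^n := by positivity
  rw [e] at h5
  nlinarith

lemma gold_mem : memHolder cantorF1 Iirr (cfVal on) (1/4) := by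
  refine ⟨2 * 10, by norm_num, fun y hy => ?_⟩
  have e0 : cantorF1 (cfVal on) = cfVal on := by rw [F1_cf]; rfl
  have nn : 0 ≤ 2 * 10 * |cfVal on - y| ^ (1/4 : ℝ) := by positivity
  by_cases hex : ∃ b : ℕ → ℕ+, cfVal b = y
  · obtain ⟨b, rfl⟩ := hex
    by_cases hb : ∃ n, b n ≠ 1
    · classical
      have hn := Nat.find_spec hb
      have hm : ∀ i < Nat.find hb, b i = 1 := fun i hi => not_not.1 (Nat.find_min hb hi)
      set n := Nat.find hb
      have h1 := lower n b hm hn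
      rw [e0, F1_cf]
      have h2 := agree_half ((n+1)/2) on (fun j => b (2*j))
        (fun i hi => (hm (2*i) (by omega)).symm)
      have h3 := Real.rpow_le_rpow (by positivity) h1 (show (0:ℝ) ≤ 1/4 by norm_num)
      have h4 : (1/10:ℝ) * (1/2)^((n+1)/2) ≤ ((1/10) * (1/4)^n)^(1/4:ℝ) := by
        have : (1/10:ℝ) * (1/2)^((n+1)/2) =
            (((1/10:ℝ) * (1/2)^((n+1)/2))^4)^(1/4:ℝ) := by
          have hw : (0:ℝ) ≤ (1/10:ℝ) * (1/2)^((n+1)/2) := by positivity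
          generalize (1/10:ℝ) * (1/2)^((n+1)/2) = w at hw
          rw [← Real.rpow_natCast, ← Real.rpow_mul hw]
          norm_num
        rw [this]
        apply Real.rpow_le_rpow (by positivity) _ (by norm_num)
        rw [mul_pow, ← pow_mul]
        have e : (1/4:ℝ)^n = (1/2)^(2*n) := by rw [pow_mul]; norm_num
        rw [e]
        apply mul_le_mul (by norm_num) _ (by positivity) (by norm_num)
        apply pow_le_pow_of_le_one (by norm_num) (by norm_num)
        omega
      linarith
    · push Not at hb
      have : b = on := funext hb
      rw [this] at nn ⊢
      simpa using nn
  · have : cantorF1 y = cfVal on := by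
      unfold cantorF1 coeff
      rw [dif_neg hex]; rfl
    rw [e0, this]
    simpa using nn

end CantorAux

/-- For the sequence `a` with `a_j = 2^j` for even `j` and `a_j = 1` for odd `j`
(0-indexed: `a j = a_{j+1}`, so `a j = 2^(j+1)` for odd `j` and `a j = 1` for even `j`),
the Hölder exponent of `f₁` at `x = [a_1,a_2,…]` is `0`; in particular `f₁` is
multifractal (its Hölder exponent is not almost surely constant). -/
theorem holderExp_cantorF1_special_point (a : ℕ → ℕ+)
    (ha : ∀ j : ℕ, Odd j → (a j : ℕ) = 2 ^ (j+1))
    (ha' : ∀ j : ℕ, Even j → a j = 1) :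
    holderExp cantorF1 Iirr (cfVal a) = 0 ∧
      ∃ y ∈ Iirr, holderExp cantorF1 Iirr y ≠ holderExp cantorF1 Iirr (cfVal a) := by
  have hz : holderExp cantorF1 Iirr (cfVal a) = 0 := by
    have : {α : ℝ | α ∈ Set.Icc (0:ℝ) 1 ∧ memHolder cantorF1 Iirr (cfVal a) α} = {0} := by
      ext α
      simp only [Set.mem_setOf_eq, Set.mem_singleton_iff]
      constructor
      · rintro ⟨h1, h2⟩
        by_contra h3
        exact CantorAux.not_mem a ha ha' α (lt_of_le_of_ne h1.1 (Ne.symm h3)) h2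
      · rintro rfl
        exact ⟨by simp, CantorAux.mem_zero _⟩
    unfold holderExp
    rw [this, csSup_singleton]
  refine ⟨hz, cfVal CantorAux.on, CantorAux.cf_mem _, ?_⟩
  rw [hz]
  have : (1/4:ℝ) ≤ holderExp cantorF1 Iirr (cfVal CantorAux.on) := by
    apply le_csSup
    · exact ⟨1, fun α h => h.1.2⟩
    · exact ⟨by norm_num, CantorAux.gold_mem⟩
  intro h
  rw [h] at this
  norm_num at this
end
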